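/- arXiv:2605.10883 — 4 statements merged into one kernel-verified Lean document; each statement's English description precedes it below -/
import Mathlib

section
/- Let a, b be integers with b > a ≥ 2. The edge-condition system f₁(α₁,β₁) = 0, f₂(α₁,β₁) = 0 has a solution (α₁,β₁) ∈ D with 0 < α₁ < π/a and 0 < β₁ < π/b if and only if (1 + cos(π/a))·sin(2π/b) > (cos(π/a) + cos(2π/b))·sin(π/a); moreover, when this inequality holds the solution of the system in D is unique. -/
open Real

/-- `B₀₀ = 1 − cos²α₁ − cos²α₂ − cos²β₁ − 2·cos α₁·cos α₂·cos β₁` with `α₂ = 2π/a − 2α₁`. -/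
noncomputable def B00 (a : ℤ) (α₁ β₁ : ℝ) : ℝ :=
  1 - cos α₁ ^ 2 - cos (2 * π / (a : ℝ) - 2 * α₁) ^ 2 - cos β₁ ^ 2
    - 2 * cos α₁ * cos (2 * π / (a : ℝ) - 2 * α₁) * cos β₁

/-- `B₁₁ = 1 − cos²α₁ − cos²β₁ − cos²β₂ − 2·cos α₁·cos β₁·cos β₂` with `β₂ = 2π/b − 2β₁`. -/
noncomputable def B11 (b : ℤ) (α₁ β₁ : ℝ) : ℝ :=
  1 - cos α₁ ^ 2 - cos β₁ ^ 2 - cos (2 * π / (b : ℝ) - 2 * β₁) ^ 2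
    - 2 * cos α₁ * cos β₁ * cos (2 * π / (b : ℝ) - 2 * β₁)

/-- `f₁(α₁,β₁) = B₀₀·sin²β₁ − B₁₁·sin²α₂`. -/
noncomputable def f1 (a b : ℤ) (α₁ β₁ : ℝ) : ℝ :=
  B00 a α₁ β₁ * sin β₁ ^ 2 - B11 b α₁ β₁ * sin (2 * π / (a : ℝ) - 2 * α₁) ^ 2

/-- `f₂(α₁,β₁) = B₁₁·sin²α₁ − B₀₀·sin²β₂`. -/
noncomputable def f2 (a b : ℤ) (α₁ β₁ : ℝ) : ℝ :=
  B11 b α₁ β₁ * sin α₁ ^ 2 - B00 a α₁ β₁ * sin (2 * π / (b : ℝ) - 2 * β₁) ^ 2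

/-- The `α₁`-interval of the domain `D`. -/
noncomputable def alphaI (a : ℤ) : Set ℝ :=
  if a = 2 then Set.Icc (π / 3) (π / 2)
  else if a = 3 then Set.Icc (π / 12) (π / 3)
  else Set.Icc 0 (π / (a : ℝ))

/-- The domain `D ⊂ ℝ²`. -/
noncomputable def Dom (a b : ℤ) : Set (ℝ × ℝ) :=
  alphaI a ×ˢ Set.Icc 0 (π / (b : ℝ))

/-!
Write `α`, `p`, `β`, `q` for `α₁`, `α₂`, `β₁`, `β₂`, and `x = π / a`, `y = π / b`. The minors `B₀₀`
and `B₁₁` are Gram determinants `(sin u sin v)² - (cos w + cos u cos v)²`, so each of `f₁`, `f₂`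
is, up to sign, a product of a sum and a difference of the same two terms, while
`sin² α · f₁ + sin² p · f₂` is a multiple of `B₀₀ · (sin α sin β - sin p sin q)` with `B₀₀ < 0`.
The solutions therefore lie on the curve `sin α sin β = sin p sin q`. In the rectangle `p ≤ α`,
`β ≤ q`, which contains all solutions, this curve descends from the corner `(2x/3, 2y/3)` to the
corner `(x, 0)`.

On the curve the system amounts to the vanishing of one more function, which increases strictly
from a negative value at the first corner; hence it has a zero before the last corner, and then
only one, exactly when its value there is positive, and that is the stated inequality. For
`x ≤ π / 3` all angles are acute and the function is the gap between the difference factors of `f₁`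
and `f₂`. For `x = π / 2` the angle `q` may be obtuse, and the difference factor of `-f₂` alone
serves.
-/

section CommonZeros

open Set

variable {X Y R : Type*}

/-- `P` and `G` on the rectangle `[a, b] × [c, d]` such that the zero set of `P` is a decreasing
curve from the corner `(a, d)` to the corner `(b, c)`, and `G` increases strictly along this curve
from a negative value at `(a, d)`. Their common zeros are then decided by the sign of `G b c`. -/
structure CrossingPair [LinearOrder X] [TopologicalSpace X] [LinearOrder Y] [TopologicalSpace Y]
    [LinearOrder R] [TopologicalSpace R] [Zero R] (P G : X → Y → R) (a b : X) (c d : Y) : Prop where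
  fst_le : a ≤ b
  snd_le : c ≤ d
  continuousOn_P : ContinuousOn (fun p : X × Y ↦ P p.1 p.2) (Icc a b ×ˢ Icc c d)
  continuousOn_G : ContinuousOn (fun p : X × Y ↦ G p.1 p.2) (Icc a b ×ˢ Icc c d)
  strictMonoOn_P_fst : ∀ v ∈ Icc c d, StrictMonoOn (P · v) (Icc a b)
  strictMonoOn_P_snd : ∀ u ∈ Icc a b, StrictMonoOn (P u) (Icc c d)
  strictMonoOn_G_fst : ∀ v ∈ Icc c d, StrictMonoOn (G · v) (Icc a b)
  antitoneOn_G_snd : ∀ u ∈ Icc a b, AntitoneOn (G u) (Icc c d)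
  P_left_top : P a d = 0
  P_right_bot : P b c = 0
  G_left_top : G a d < 0

theorem isPreconnected_of_isCompact_of_injOn [TopologicalSpace X] [TopologicalSpace Y] [T2Space Y]
    {f : X → Y} {K : Set X} (hK : IsCompact K) (hf : ContinuousOn f K) (hinj : InjOn f K)
    (himage : IsPreconnected (f '' K)) : IsPreconnected K := by
  have : CompactSpace K := isCompact_iff_compactSpace.mp hK
  have hclosed : IsClosedMap (K.domRestrict f) := hf.domRestrict.isClosedMap
  have hpre := himage.preimage_of_isClosedMap (injOn_iff_injective.mp hinj) hclosed
    (range_domRestrict f K).ge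
  have huniv : K.domRestrict f ⁻¹' (f '' K) = univ :=
    eq_univ_of_forall fun p ↦ mem_image_of_mem f p.2
  rw [huniv] at hpre
  exact isPreconnected_iff_preconnectedSpace.mpr ⟨hpre⟩

namespace CrossingPair

variable [LinearOrder X] [TopologicalSpace X] [LinearOrder Y] [TopologicalSpace Y]
  [LinearOrder R] [TopologicalSpace R] [Zero R]
  {P G : X → Y → R} {a b : X} {c d : Y} {u u' : X} {v v' : Y}

theorem snd_lt_and_lt_of_fst_lt (h : CrossingPair P G a b c d) (hu : u ∈ Icc a b) (hv : v ∈ Icc c d)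
    (hu' : u' ∈ Icc a b) (hv' : v' ∈ Icc c d) (hP : P u v = 0) (hP' : P u' v' = 0)
    (hlt : u < u') : v' < v ∧ G u v < G u' v' := by
  have hvv : v' < v := by
    refine (h.strictMonoOn_P_snd u' hu').lt_iff_lt hv' hv |>.mp ?_
    calc P u' v' = P u v := hP'.trans hP.symm
      _ < P u' v := h.strictMonoOn_P_fst v hv hu hu' hlt
  exact ⟨hvv, (h.strictMonoOn_G_fst v hv hu hu' hlt).trans_le
    (h.antitoneOn_G_snd u' hu' hv' hv hvv.le)⟩

theorem snd_unique (h : CrossingPair P G a b c d) (hu : u ∈ Icc a b) (hv : v ∈ Icc c d)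
    (hv' : v' ∈ Icc c d) (hP : P u v = 0) (hP' : P u v' = 0) : v = v' :=
  (h.strictMonoOn_P_snd u hu).injOn hv hv' (hP.trans hP'.symm)

theorem unique (h : CrossingPair P G a b c d) (hu : u ∈ Icc a b) (hv : v ∈ Icc c d)
    (hu' : u' ∈ Icc a b) (hv' : v' ∈ Icc c d) (hP : P u v = 0) (hG : G u v = 0)
    (hP' : P u' v' = 0) (hG' : G u' v' = 0) : (u, v) = (u', v') := by
  rcases lt_trichotomy u u' with hlt | rfl | hlt
  · exact absurd (hG.trans hG'.symm) (h.snd_lt_and_lt_of_fst_lt hu hv hu' hv' hP hP' hlt).2.ne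
  · rw [h.snd_unique hu hv hv' hP hP']
  · exact absurd (hG'.trans hG.symm) (h.snd_lt_and_lt_of_fst_lt hu' hv' hu hv hP' hP hlt).2.ne

end CrossingPair

section

variable [LinearOrder X] [TopologicalSpace X] [ConditionallyCompleteLinearOrder Y]
  [TopologicalSpace Y] [OrderTopology Y] [DenselyOrdered Y]
  [LinearOrder R] [TopologicalSpace R] [OrderClosedTopology R] [Zero R]
  {P G : X → Y → R} {a b : X} {c d : Y}

theorem CrossingPair.exists_zero_of_fst_mem (h : CrossingPair P G a b c d) {u : X}
    (hu : u ∈ Icc a b) : ∃ v ∈ Icc c d, P u v = 0 := by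
  have hcont : ContinuousOn (P u) (Icc c d) := h.continuousOn_P.uncurry_left u hu
  have hbot : P u c ≤ 0 :=
    ((h.strictMonoOn_P_fst c (left_mem_Icc.mpr h.snd_le)).monotoneOn hu
      (right_mem_Icc.mpr h.fst_le) hu.2).trans_eq h.P_right_bot
  have htop : 0 ≤ P u d :=
    h.P_left_top.ge.trans ((h.strictMonoOn_P_fst d (right_mem_Icc.mpr h.snd_le)).monotoneOn
      (left_mem_Icc.mpr h.fst_le) hu hu.1)
  exact intermediate_value_Icc h.snd_le hcont ⟨hbot, htop⟩

end

section

variable [ConditionallyCompleteLinearOrder X] [TopologicalSpace X] [OrderTopology X]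
  [ConditionallyCompleteLinearOrder Y] [TopologicalSpace Y] [OrderTopology Y]
  [LinearOrder R] [TopologicalSpace R] [OrderClosedTopology R] [Zero R]
  {P G : X → Y → R} {a b : X} {c d : Y}

namespace CrossingPair

theorem isCompact_zeros (h : CrossingPair P G a b c d) :
    IsCompact {p ∈ Icc a b ×ˢ Icc c d | P p.1 p.2 = 0} :=
  (isCompact_Icc.prod isCompact_Icc).of_isClosed_subset
    (h.continuousOn_P.preimage_isClosed_of_isClosed (isClosed_Icc.prod isClosed_Icc)
      (isClosed_singleton (x := (0 : R)))) (sep_subset _ _)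

variable [DenselyOrdered X] [DenselyOrdered Y]

theorem isPreconnected_zeros (h : CrossingPair P G a b c d) :
    IsPreconnected {p ∈ Icc a b ×ˢ Icc c d | P p.1 p.2 = 0} := by
  refine isPreconnected_of_isCompact_of_injOn h.isCompact_zeros continuous_fst.continuousOn ?_ ?_
  · rintro ⟨u, v⟩ ⟨⟨hu, hv⟩, hP⟩ ⟨u', v'⟩ ⟨⟨-, hv'⟩, hP'⟩ (rfl : u = u')
    exact Prod.ext rfl (h.snd_unique hu hv hv' hP hP')
  · suffices Prod.fst '' {p ∈ Icc a b ×ˢ Icc c d | P p.1 p.2 = 0} = Icc a b by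
      rw [this]; exact isPreconnected_Icc
    refine Subset.antisymm (image_subset_iff.mpr fun p hp ↦ hp.1.1) fun u hu ↦ ?_
    obtain ⟨v, hv, hP⟩ := h.exists_zero_of_fst_mem hu
    exact ⟨(u, v), ⟨⟨hu, hv⟩, hP⟩, rfl⟩

theorem exists_common_zero (h : CrossingPair P G a b c d) (hG : 0 < G b c) :
    ∃ u ∈ Ico a b, ∃ v ∈ Ioc c d, P u v = 0 ∧ G u v = 0 := by
  have hbR : b ∈ Icc a b := right_mem_Icc.mpr h.fst_le
  have hcR : c ∈ Icc c d := left_mem_Icc.mpr h.snd_le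
  obtain ⟨⟨u, v⟩, ⟨⟨hu, hv⟩, hP⟩, hG0⟩ : (0 : R) ∈ (fun p : X × Y ↦ G p.1 p.2) ''
      {p ∈ Icc a b ×ˢ Icc c d | P p.1 p.2 = 0} :=
    h.isPreconnected_zeros.intermediate_value (a := (a, d)) (b := (b, c))
      ⟨⟨left_mem_Icc.mpr h.fst_le, right_mem_Icc.mpr h.snd_le⟩, h.P_left_top⟩
      ⟨⟨hbR, hcR⟩, h.P_right_bot⟩ (h.continuousOn_G.mono (sep_subset _ _))
      ⟨h.G_left_top.le, hG.le⟩
  have hub : u < b := by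
    refine hu.2.lt_of_ne ?_
    rintro rfl
    rw [← h.snd_unique hu hv hcR hP h.P_right_bot] at hG
    exact hG.ne' hG0
  have hcv : c < v := (h.snd_lt_and_lt_of_fst_lt hu hv hbR hcR hP h.P_right_bot hub).1
  exact ⟨u, ⟨hu.1, hub⟩, v, ⟨hcv, hv.2⟩, hP, hG0⟩

theorem exists_iff_and_existsUnique (h : CrossingPair P G a b c d) {s : Set (X × Y)}
    (hfwd : ∀ p ∈ s, p ∈ Icc a b ×ˢ Icc c d ∧ P p.1 p.2 = 0 ∧ G p.1 p.2 = 0)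
    (hbwd : ∀ p ∈ Ico a b ×ˢ Ioc c d, P p.1 p.2 = 0 → G p.1 p.2 = 0 → p ∈ s) :
    ((∃ p ∈ s, p ∈ Ico a b ×ˢ Ioc c d) ↔ 0 < G b c) ∧ (0 < G b c → ∃! p, p ∈ s) := by
  have hmem (hG : 0 < G b c) : ∃ p ∈ s, p ∈ Ico a b ×ˢ Ioc c d := by
    obtain ⟨u, hu, v, hv, hP, hG0⟩ := h.exists_common_zero hG
    exact ⟨(u, v), hbwd _ ⟨hu, hv⟩ hP hG0, hu, hv⟩
  refine ⟨⟨?_, hmem⟩, fun hG ↦ ?_⟩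
  · rintro ⟨p, hp, hpI⟩
    obtain ⟨hpR, hP, hG⟩ := hfwd p hp
    exact hG.symm.trans_lt (h.snd_lt_and_lt_of_fst_lt hpR.1 hpR.2 (right_mem_Icc.mpr h.fst_le)
      (left_mem_Icc.mpr h.snd_le) hP h.P_right_bot hpI.1.2).2
  · obtain ⟨p, hp, -⟩ := hmem hG
    refine ⟨p, hp, fun q hq ↦ ?_⟩
    obtain ⟨hpR, hP, hG⟩ := hfwd p hp
    obtain ⟨hqR, hP', hG'⟩ := hfwd q hq
    exact h.unique hqR.1 hqR.2 hpR.1 hpR.2 hP' hG' hP hG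

end CrossingPair

end

end CommonZeros

/-- The Gram determinant `1 - cos² u - cos² v - cos² w - 2 cos u cos v cos w` of a trihedral angle
with dihedral angles `u`, `v`, `w`; the minors `B00` and `B11` are of this form. -/
noncomputable def gramDet (u v w : ℝ) : ℝ :=
  1 - cos u ^ 2 - cos v ^ 2 - cos w ^ 2 - 2 * cos u * cos v * cos w

/-- The edge condition `f1` with the four angles `α = α₁`, `p = α₂`, `β = β₁`, `q = β₂` kept
independent. Exchanging the two pairs of angles gives `f2`. -/
noncomputable def edgeFun (α p β q : ℝ) : ℝ :=
  gramDet α p β * sin β ^ 2 - gramDet α β q * sin p ^ 2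

/-- The factor of `-edgeFun` which is a difference of two terms, both nonnegative for acute
angles. -/
noncomputable def edgeDiff (α p β q : ℝ) : ℝ :=
  (cos β + cos α * cos p) * sin β - (cos q + cos α * cos β) * sin p

/-- The factor of `-edgeFun` complementary to `edgeDiff`. -/
noncomputable def edgeSum (α p β q : ℝ) : ℝ :=
  (cos β + cos α * cos p) * sin β + (cos q + cos α * cos β) * sin p

/-- The defect of the relation `sin α sin β = sin p sin q` between the four angles. -/
noncomputable def sinDefect (α p β q : ℝ) : ℝ :=
  sin α * sin β - sin p * sin q

/-- The difference of the factors `edgeDiff` of the two edge conditions. -/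
noncomputable def edgeGap (α p β q : ℝ) : ℝ :=
  edgeDiff α p β q - edgeDiff β q α p

section EdgeFunctions

variable {u v w α p β q : ℝ}

theorem gramDet_eq_sq_sub_sq (u v w : ℝ) :
    gramDet u v w = (sin u * sin v) ^ 2 - (cos w + cos u * cos v) ^ 2 := by
  rw [gramDet, mul_pow, sin_sq, sin_sq]
  ring

theorem gramDet_neg (hu : 0 ≤ u) (hv : 0 ≤ v) (hw : 0 ≤ w) (huvw : u + v + w < π) :
    gramDet u v w < 0 := by
  have hsin : 0 ≤ sin u * sin v := mul_nonneg
    (sin_nonneg_of_nonneg_of_le_pi hu (by linarith))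
    (sin_nonneg_of_nonneg_of_le_pi hv (by linarith))
  have hcos : sin u * sin v < cos w + cos u * cos v := by
    have : cos (π - w) < cos (u + v) :=
      cos_lt_cos_of_nonneg_of_le_pi (add_nonneg hu hv) (by linarith) (by linarith)
    rw [cos_pi_sub, cos_add] at this
    linarith
  rw [gramDet_eq_sq_sub_sq, sub_neg]
  exact pow_lt_pow_left₀ hcos hsin two_ne_zero

theorem edgeFun_eq_neg_edgeDiff_mul_edgeSum (α p β q : ℝ) :
    edgeFun α p β q = -(edgeDiff α p β q * edgeSum α p β q) := by
  rw [edgeFun, gramDet_eq_sq_sub_sq, gramDet_eq_sq_sub_sq, edgeDiff, edgeSum]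
  ring

theorem sin_sq_mul_edgeFun_add (α p β q : ℝ) :
    sin α ^ 2 * edgeFun α p β q + sin p ^ 2 * edgeFun β q α p =
      gramDet α p β * sinDefect α p β q * (sin α * sin β + sin p * sin q) := by
  simp only [edgeFun, sinDefect, gramDet]
  ring

theorem sinDefect_swap (α p β q : ℝ) : sinDefect β q α p = sinDefect α p β q := by
  rw [sinDefect, sinDefect, mul_comm, mul_comm (sin q)]

theorem edgeGap_swap (α p β q : ℝ) : edgeGap β q α p = -edgeGap α p β q :=
  (neg_sub _ _).symm

theorem sinDefect_eq_zero (hα : 0 ≤ α) (hp : 0 ≤ p) (hβ : 0 ≤ β) (hq : 0 ≤ q) (hqπ : q ≤ π)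
    (hsum : α + p + β < π) (h₁ : edgeFun α p β q = 0) (h₂ : edgeFun β q α p = 0) :
    sinDefect α p β q = 0 := by
  have hsinαβ : 0 ≤ sin α * sin β := mul_nonneg
    (sin_nonneg_of_nonneg_of_le_pi hα (by linarith))
    (sin_nonneg_of_nonneg_of_le_pi hβ (by linarith))
  have hsinpq : 0 ≤ sin p * sin q := mul_nonneg
    (sin_nonneg_of_nonneg_of_le_pi hp (by linarith)) (sin_nonneg_of_nonneg_of_le_pi hq hqπ)
  have hgram : gramDet α p β ≠ 0 := (gramDet_neg hα hp hβ hsum).ne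
  have hprod : gramDet α p β * sinDefect α p β q * (sin α * sin β + sin p * sin q) = 0 := by
    rw [← sin_sq_mul_edgeFun_add, h₁, h₂, mul_zero, mul_zero, add_zero]
  rcases mul_eq_zero.mp hprod with h | h
  · exact (mul_eq_zero.mp h).resolve_left hgram
  · rw [sinDefect]
    linarith

theorem edgeFun_eq_zero_of_sinDefect_eq_zero (hα : sin α ≠ 0) (hdef : sinDefect α p β q = 0)
    (h : edgeFun β q α p = 0) : edgeFun α p β q = 0 := by
  have hsum := sin_sq_mul_edgeFun_add α p β q
  rw [h, hdef, mul_zero, mul_zero, zero_mul, add_zero] at hsum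
  exact (mul_eq_zero.mp hsum).resolve_left (pow_ne_zero 2 hα)

theorem cos_nonneg_of_mem_Icc_zero {t : ℝ} (ht : t ∈ Set.Icc 0 (π / 2)) : 0 ≤ cos t :=
  cos_nonneg_of_mem_Icc ⟨by linarith [ht.1, ht.2], ht.2⟩

theorem edgeDiff_eq_zero (hα : α ∈ Set.Icc 0 (π / 2)) (hp : p ∈ Set.Icc 0 (π / 2))
    (hβ : β ∈ Set.Icc 0 (π / 2)) (hq : q ∈ Set.Icc 0 (π / 2)) (h : edgeFun α p β q = 0) :
    edgeDiff α p β q = 0 := by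
  rw [edgeFun_eq_neg_edgeDiff_mul_edgeSum, neg_eq_zero] at h
  rcases mul_eq_zero.mp h with h | h
  · exact h
  · have hcosα := cos_nonneg_of_mem_Icc_zero hα
    have hcosp := cos_nonneg_of_mem_Icc_zero hp
    have hcosβ := cos_nonneg_of_mem_Icc_zero hβ
    have hcosq := cos_nonneg_of_mem_Icc_zero hq
    have hsinp : 0 ≤ sin p := sin_nonneg_of_nonneg_of_le_pi hp.1 (by linarith [hp.2, pi_pos])
    have hsinβ : 0 ≤ sin β := sin_nonneg_of_nonneg_of_le_pi hβ.1 (by linarith [hβ.2, pi_pos])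
    have hfst : 0 ≤ (cos β + cos α * cos p) * sin β := by positivity
    have hsnd : 0 ≤ (cos q + cos α * cos β) * sin p := by positivity
    rw [edgeSum] at h
    rw [edgeDiff]
    linarith

theorem edgeSum_pos (hα : 0 ≤ cos α) (hp : 0 ≤ cos p) (hβ : 0 < cos β) (hq : 0 ≤ cos q)
    (hp' : 0 ≤ sin p) (hβ' : 0 < sin β) : 0 < edgeSum α p β q := by
  rw [edgeSum]
  positivity

theorem edgeFun_eq_zero_of_edgeGap_eq_zero (hα : 0 < sin α) (hS₁ : 0 < edgeSum α p β q)
    (hS₂ : 0 < edgeSum β q α p) (hdef : sinDefect α p β q = 0) (hgap : edgeGap α p β q = 0) :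
    edgeFun α p β q = 0 ∧ edgeFun β q α p = 0 := by
  have hE : edgeDiff β q α p = edgeDiff α p β q := (sub_eq_zero.mp hgap).symm
  have hcomb : edgeDiff α p β q *
      (sin α ^ 2 * edgeSum α p β q + sin p ^ 2 * edgeSum β q α p) = 0 := by
    have hsum := sin_sq_mul_edgeFun_add α p β q
    rw [edgeFun_eq_neg_edgeDiff_mul_edgeSum, edgeFun_eq_neg_edgeDiff_mul_edgeSum, hE, hdef] at hsum
    linear_combination -hsum
  have hzero : edgeDiff α p β q = 0 := (mul_eq_zero.mp hcomb).resolve_right (by positivity)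
  rw [edgeFun_eq_neg_edgeDiff_mul_edgeSum, edgeFun_eq_neg_edgeDiff_mul_edgeSum, hE, hzero]
  simp only [zero_mul, neg_zero, and_self]

theorem edgeDiff_neg (hα : 0 ≤ cos α) (hq : 0 ≤ q) (hqβ : q ≤ β) (hβp : β ≤ p) (hqp : q < p)
    (hp : p ≤ π / 2) : edgeDiff α p β q < 0 := by
  have hsin : sin β ≤ sin p := sin_le_sin_of_le_of_le_pi_div_two (by linarith) hp hβp
  have hcosβ : 0 ≤ cos β := cos_nonneg_of_mem_Icc ⟨by linarith, by linarith⟩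
  have hcosβp : cos p ≤ cos β :=
    cos_le_cos_of_nonneg_of_le_pi (hq.trans hqβ) (by linarith) hβp
  have hcosβq : cos β ≤ cos q := cos_le_cos_of_nonneg_of_le_pi hq (by linarith) hqβ
  have hsinβ : 0 ≤ sin β := sin_nonneg_of_nonneg_of_le_pi (by linarith) (by linarith)
  have hsinp : 0 < sin p := sin_pos_of_pos_of_lt_pi (by linarith) (by linarith)
  have hfst : cos β * sin β < cos q * sin p := by
    rcases hqβ.eq_or_lt with rfl | hlt
    · have hlt : sin q < sin p := sin_lt_sin_of_lt_of_le_pi_div_two (by linarith) hp hqp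
      have : 0 < cos q := cos_pos_of_mem_Ioo ⟨by linarith, by linarith⟩
      gcongr
    · have : cos β < cos q := cos_lt_cos_of_nonneg_of_le_pi hq (by linarith) hlt
      calc cos β * sin β ≤ cos β * sin p := by gcongr
        _ < cos q * sin p := by gcongr
  have hsnd : cos p * sin β ≤ cos β * sin p := by gcongr
  rw [edgeDiff]
  linarith [mul_le_mul_of_nonneg_left hsnd hα]

theorem edgeDiff_pos (hα : 0 ≤ cos α) (hp : 0 ≤ p) (hpβ : p < β) (hβq : β ≤ q)
    (hβ : β < π / 2) (hq : q ≤ π) : 0 < edgeDiff α p β q := by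
  have hsin : sin p < sin β := sin_lt_sin_of_lt_of_le_pi_div_two (by linarith) hβ.le hpβ
  have hcosβ : 0 < cos β := cos_pos_of_mem_Ioo ⟨by linarith, by linarith⟩
  have hcosβp : cos β ≤ cos p := cos_le_cos_of_nonneg_of_le_pi hp (by linarith) hpβ.le
  have hcosβq : cos q ≤ cos β := cos_le_cos_of_nonneg_of_le_pi (by linarith) hq hβq
  have hsinp : 0 ≤ sin p := sin_nonneg_of_nonneg_of_le_pi hp (by linarith)
  have hfst : cos q * sin p < cos β * sin β :=
    calc cos q * sin p ≤ cos β * sin p := by gcongr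
      _ < cos β * sin β := by gcongr
  have hsnd : cos β * sin p ≤ cos p * sin β :=
    mul_le_mul hcosβp hsin.le hsinp (hcosβ.le.trans hcosβp)
  rw [edgeDiff]
  linarith [mul_le_mul_of_nonneg_left hsnd hα]

theorem le_of_sinDefect_nonpos (hpα : p ≤ α) (hα : 0 < α) (hα' : α ≤ π / 2) (hp : 0 ≤ p)
    (hβ : β ≤ π / 2) (hq : 0 ≤ q) (hdef : sinDefect α p β q ≤ 0) : β ≤ q := by
  by_contra! hqβ
  have hsinα : 0 < sin α := sin_pos_of_pos_of_lt_pi hα (by linarith)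
  have hsinq : 0 ≤ sin q := sin_nonneg_of_nonneg_of_le_pi hq (by linarith)
  have hqβ' : sin q < sin β := sin_lt_sin_of_lt_of_le_pi_div_two (by linarith) hβ hqβ
  have hpα' : sin p ≤ sin α := sin_le_sin_of_le_of_le_pi_div_two (by linarith) hα' hpα
  have : sin p * sin q < sin α * sin β :=
    calc sin p * sin q ≤ sin α * sin q := by gcongr
      _ < sin α * sin β := by gcongr
  rw [sinDefect] at hdef
  linarith

theorem snd_le_fst_of_edgeDiff_eq_zero (hα : 0 ≤ α) (hp : p ≤ π / 2) (hβ : 0 ≤ β)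
    (hβ' : β ≤ π / 2) (hq : 0 ≤ q) (hq' : q ≤ π / 2) (hsum : 2 * β + q < 2 * α + p)
    (hdef : sinDefect α p β q = 0) (h₁ : edgeDiff α p β q = 0) (h₂ : edgeDiff β q α p = 0) :
    p ≤ α := by
  by_contra! hαp
  have hqβ : q ≤ β := by
    refine le_of_sinDefect_nonpos hαp.le (by linarith) hp hα hq' hβ ?_
    rw [sinDefect] at hdef ⊢
    linarith
  have hpβ : p < β := by
    by_contra! hβp
    refine (edgeDiff_neg ?_ hq hqβ hβp (by linarith) hp).ne h₁
    exact cos_nonneg_of_mem_Icc ⟨by linarith, by linarith⟩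
  have hαq : α ≤ q := by
    by_contra! hqα
    refine (edgeDiff_pos ?_ hq hqα hαp.le (by linarith) (by linarith)).ne' h₂
    exact cos_nonneg_of_mem_Icc ⟨by linarith, hβ'⟩
  linarith

end EdgeFunctions

/-- The derivative of `edgeGap` along `α ↦ (α, c - 2 * α)` with `β` and `q` fixed. -/
noncomputable def edgeGapDeriv (α p β q : ℝ) : ℝ :=
  cos (α + β - p) + cos α * cos (p - β) + 2 * cos p * cos q -
    (cos (2 * α) + cos β * cos (q - α) - 2 * sin q * sin p)

section Derivatives

open Set

theorem strictMonoOn_Icc_of_hasDerivAt_pos {f f' : ℝ → ℝ} {a b : ℝ}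
    (hf : ∀ t ∈ Icc a b, HasDerivAt f (f' t) t) (hpos : ∀ t ∈ Ioo a b, 0 < f' t) :
    StrictMonoOn f (Icc a b) := by
  refine strictMonoOn_of_hasDerivWithinAt_pos (convex_Icc a b) (HasDerivAt.continuousOn hf)
    (fun t ht ↦ (hf t (interior_subset ht)).hasDerivWithinAt) fun t ht ↦ hpos t ?_
  rwa [interior_Icc] at ht

theorem antitoneOn_Icc_of_hasDerivAt_nonpos {f f' : ℝ → ℝ} {a b : ℝ}
    (hf : ∀ t ∈ Icc a b, HasDerivAt f (f' t) t) (hneg : ∀ t ∈ Ioo a b, f' t ≤ 0) :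
    AntitoneOn f (Icc a b) := by
  refine antitoneOn_of_hasDerivWithinAt_nonpos (convex_Icc a b) (HasDerivAt.continuousOn hf)
    (fun t ht ↦ (hf t (interior_subset ht)).hasDerivWithinAt) fun t ht ↦ hneg t ?_
  rwa [interior_Icc] at ht

theorem hasDerivAt_cos_sub_two_mul (c t : ℝ) :
    HasDerivAt (fun t ↦ cos (c - 2 * t)) (2 * sin (c - 2 * t)) t := by
  refine HasDerivAt.congr_deriv ((((hasDerivAt_id' t).const_mul 2).const_sub c).cos) ?_
  ring

theorem hasDerivAt_sin_sub_two_mul (c t : ℝ) :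
    HasDerivAt (fun t ↦ sin (c - 2 * t)) (-2 * cos (c - 2 * t)) t := by
  refine HasDerivAt.congr_deriv ((((hasDerivAt_id' t).const_mul 2).const_sub c).sin) ?_
  ring

theorem hasDerivAt_sinDefect_fst (c t β q : ℝ) :
    HasDerivAt (fun t ↦ sinDefect t (c - 2 * t) β q)
      (cos t * sin β + 2 * cos (c - 2 * t) * sin q) t := by
  refine HasDerivAt.congr_deriv (((hasDerivAt_sin t).mul_const (sin β)).sub
    ((hasDerivAt_sin_sub_two_mul c t).mul_const (sin q))) ?_
  ring

theorem hasDerivAt_edgeDiff_fst (c t β q : ℝ) :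
    HasDerivAt (fun t ↦ edgeDiff t (c - 2 * t) β q)
      (cos (t + β - (c - 2 * t)) + cos t * cos (c - 2 * t - β) +
        2 * cos (c - 2 * t) * cos q) t := by
  have hcos := hasDerivAt_cos t
  refine HasDerivAt.congr_deriv
    ((((hcos.mul (hasDerivAt_cos_sub_two_mul c t)).const_add (cos β)).mul_const (sin β)).sub
      (((hcos.mul_const (cos β)).const_add (cos q)).mul (hasDerivAt_sin_sub_two_mul c t))) ?_
  rw [← sub_sub_eq_add_sub, cos_sub t, cos_sub _ β, sin_sub _ β]
  ring

theorem hasDerivAt_edgeDiff_snd (α p c t : ℝ) :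
    HasDerivAt (fun t ↦ edgeDiff α p t (c - 2 * t))
      (cos (2 * t) + cos α * cos (p - t) - 2 * sin p * sin (c - 2 * t)) t := by
  have hcos := hasDerivAt_cos t
  refine HasDerivAt.congr_deriv (((hcos.add_const (cos α * cos p)).mul (hasDerivAt_sin t)).sub
    (((hasDerivAt_cos_sub_two_mul c t).add (hcos.const_mul (cos α))).mul_const (sin p))) ?_
  rw [cos_two_mul, cos_sub]
  linear_combination -sin_sq t

theorem hasDerivAt_edgeGap_fst (c t β q : ℝ) :
    HasDerivAt (fun t ↦ edgeGap t (c - 2 * t) β q) (edgeGapDeriv t (c - 2 * t) β q) t :=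
  (hasDerivAt_edgeDiff_fst c t β q).sub (hasDerivAt_edgeDiff_snd β q c t)

theorem hasDerivAt_edgeGap_snd (α p c t : ℝ) :
    HasDerivAt (fun t ↦ edgeGap α p t (c - 2 * t)) (-edgeGapDeriv t (c - 2 * t) α p) t := by
  simpa only [edgeGap_swap _ _ α p, Pi.neg_def, neg_neg] using (hasDerivAt_edgeGap_fst c t α p).neg

theorem strictMonoOn_sinDefect_fst {c d x β q : ℝ} (hc : 0 ≤ c) (hxc : 2 * x ≤ 2 * c + π / 2)
    (hdx : d ≤ x) (hd : d ≤ π / 2) (hβ : 0 ≤ sin β) (hq : 0 ≤ sin q)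
    (hβq : 0 < sin β ∨ 0 < sin q) :
    StrictMonoOn (fun t ↦ sinDefect t (2 * x - 2 * t) β q) (Icc c d) := by
  refine strictMonoOn_Icc_of_hasDerivAt_pos (fun t _ ↦ hasDerivAt_sinDefect_fst _ t β q) ?_
  rintro t ⟨hct, htd⟩
  have hcos : 0 < cos t := cos_pos_of_mem_Ioo ⟨by linarith, by linarith⟩
  have hcos' : 0 < cos (2 * x - 2 * t) := cos_pos_of_mem_Ioo ⟨by linarith, by linarith⟩
  rcases hβq with hpos | hpos <;> positivity

end Derivatives

section AngleInequalities

variable {u v α p β q : ℝ}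

theorem cos_le_cos_of_abs_le (h : |u| ≤ v) (hv : v ≤ π) : cos v ≤ cos u :=
  cos_abs u ▸ cos_le_cos_of_nonneg_of_le_pi (abs_nonneg u) hv h

theorem half_le_cos_of_abs_le (h : |u| ≤ π / 3) : 1 / 2 ≤ cos u :=
  cos_pi_div_three ▸ cos_le_cos_of_abs_le h (by linarith [pi_pos])

theorem lt_sqrt_three : (1.73 : ℝ) < √3 := by
  apply lt_sqrt_of_sq_lt
  norm_num

theorem edgeGapDeriv_eq (α p β q : ℝ) :
    edgeGapDeriv α p β q = sin α * sin (p - β) + 2 * cos α * cos (p - β) + 2 * cos (p - q) -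
      cos (2 * α) - cos β * cos (q - α) := by
  have hsum : cos (α + β - p) = cos α * cos (p - β) + sin α * sin (p - β) := by
    rw [← cos_sub, sub_sub_eq_add_sub]
  rw [edgeGapDeriv, hsum, cos_sub p q]
  ring

theorem edgeGapDeriv_pos (hp : 0 < p) (hpα : p ≤ α) (hα : α ≤ π / 3) (hβ : 0 ≤ β) (hβα : β ≤ α)
    (hβq : β ≤ q) (hq : 2 * β + q ≤ π / 2) : 0 < edgeGapDeriv α p β q := by
  have hcosα : 0 ≤ cos α := cos_nonneg_of_mem_Icc ⟨by linarith, by linarith⟩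
  have hsinα : 0 ≤ sin α := sin_nonneg_of_nonneg_of_le_pi (by linarith) (by linarith)
  have hcosβ : 1 / 2 ≤ cos β := half_le_cos_of_abs_le (by rw [abs_of_nonneg hβ]; linarith)
  have hcospβ : cos α ≤ cos (p - β) :=
    cos_le_cos_of_abs_le (abs_le.mpr ⟨by linarith, by linarith⟩) (by linarith)
  have hprod : cos β * cos (q - α) ≤ 1 :=
    (mul_le_of_le_one_right (by linarith) (cos_le_one _)).trans (cos_le_one β)
  suffices 0 < sin α * sin (p - β) + 2 * cos (p - q) by
    rw [edgeGapDeriv_eq, cos_two_mul]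
    nlinarith
  rcases le_or_gt β p with hβp | hpβ
  · have hsin : 0 ≤ sin (p - β) := sin_nonneg_of_nonneg_of_le_pi (by linarith) (by linarith)
    have hcos : 0 < cos (p - q) := cos_pos_of_mem_Ioo ⟨by linarith, by linarith⟩
    positivity
  · have hsinβ : 0 < sin β := sin_pos_of_pos_of_lt_pi (by linarith) (by linarith)
    have hsin_nonneg : 0 ≤ sin (β - p) :=
      sin_nonneg_of_nonneg_of_le_pi (by linarith) (by linarith)
    have hsin : sin α * sin (β - p) ≤ sin β :=
      (mul_le_of_le_one_left hsin_nonneg (sin_le_one α)).trans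
        (sin_le_sin_of_le_of_le_pi_div_two (by linarith) (by linarith) (by linarith))
    have hcos : 2 * sin β * cos β ≤ cos (p - q) := by
      rw [← sin_two_mul, ← cos_pi_div_two_sub]
      exact cos_le_cos_of_abs_le (abs_le.mpr ⟨by linarith, by linarith⟩) (by linarith)
    rw [← neg_sub β p, sin_neg]
    nlinarith

theorem one_add_cos_le_two_mul_cos_add_two_mul_cos (hp : 0 ≤ p) (hpα : p ≤ α) (hα : α ≤ π / 3)
    (hαq : α ≤ q) (hq : q ≤ π / 6 + α + p / 2) :
    1 + cos α ≤ 2 * cos (q - α) + 2 * cos (q - p) := by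
  have hhalf : 0 ≤ cos (α / 2) := cos_nonneg_of_mem_Icc ⟨by linarith, by linarith⟩
  have hmid : cos (π / 6 + α / 2) ≤ cos (q - (α + p) / 2) :=
    cos_le_cos_of_abs_le (abs_le.mpr ⟨by linarith, by linarith⟩) (by linarith)
  have hdiff : cos (α / 2) ≤ cos ((α - p) / 2) :=
    cos_le_cos_of_abs_le (abs_le.mpr ⟨by linarith, by linarith⟩) (by linarith)
  have hmid_nonneg : 0 ≤ cos (π / 6 + α / 2) :=
    cos_nonneg_of_mem_Icc ⟨by linarith, by linarith⟩
  have hmid_nonneg' := hmid_nonneg.trans hmid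
  have hcosα : 1 / 2 ≤ cos α := half_le_cos_of_abs_le (abs_le.mpr ⟨by linarith, hα⟩)
  calc 1 + cos α ≤ √3 * cos α - sin α + √3 := by
        nlinarith [sin_le_one α, lt_sqrt_three]
    _ = 2 * cos (π / 6 + α) + 2 * cos (π / 6) := by
        rw [cos_add, cos_pi_div_six, sin_pi_div_six]
        ring
    _ = 4 * (cos (π / 6 + α / 2) * cos (α / 2)) := by
        rw [← mul_add, cos_add_cos]
        ring_nf
    _ ≤ 4 * (cos (q - (α + p) / 2) * cos ((α - p) / 2)) := by gcongr
    _ = 2 * cos (q - α) + 2 * cos (q - p) := by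
        rw [← mul_add, add_comm (cos _), cos_add_cos]
        ring_nf

theorem edgeGapDeriv_swap_nonneg (hp : 0 ≤ p) (hpα : p ≤ α) (hα : α ≤ π / 3) (hβ : 0 ≤ β)
    (hβq : β ≤ q) (hq : 2 * β + q ≤ α + p / 2 + π / 6) : 0 ≤ edgeGapDeriv β q α p := by
  have hcosβ : 0 ≤ cos β := cos_nonneg_of_mem_Icc ⟨by linarith, by linarith⟩
  rcases le_total q α with hqα | hαq
  · have hcosα : 0 ≤ cos α := cos_nonneg_of_mem_Icc ⟨by linarith, by linarith⟩
    have hsum : cos α ≤ cos (β + α - q) :=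
      cos_le_cos_of_abs_le (abs_le.mpr ⟨by linarith, by linarith⟩) (by linarith)
    have hprod : cos α * cos (p - β) ≤ cos α := mul_le_of_le_one_right hcosα (cos_le_one _)
    have hqα' : 0 ≤ cos (q - α) := cos_nonneg_of_mem_Icc ⟨by linarith, by linarith⟩
    have hqp : 1 / 2 ≤ cos (q - p) :=
      half_le_cos_of_abs_le (abs_le.mpr ⟨by linarith, by linarith⟩)
    rw [cos_sub] at hqp
    rw [edgeGapDeriv]
    linarith [mul_nonneg hcosβ hqα', cos_le_one (2 * β)]
  · have hsin : 0 ≤ sin β * sin (q - α) := mul_nonneg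
      (sin_nonneg_of_nonneg_of_le_pi hβ (by linarith))
      (sin_nonneg_of_nonneg_of_le_pi (by linarith) (by linarith))
    have hprod : cos α * cos (p - β) ≤ cos α := mul_le_of_le_one_right
      (cos_nonneg_of_mem_Icc ⟨by linarith, by linarith⟩) (cos_le_one _)
    have hcos := one_add_cos_le_two_mul_cos_add_two_mul_cos hp hpα hα hαq (by linarith)
    have hfactor : 0 ≤ (1 - cos β) * (1 + cos β - cos (q - α)) :=
      mul_nonneg (by linarith [cos_le_one β]) (by linarith [cos_le_one (q - α)])
    rw [edgeGapDeriv_eq, cos_two_mul]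
    linarith

end AngleInequalities

section SmallAngle

open Set

theorem two_mul_sub_two_mul_two_thirds (u : ℝ) : 2 * u - 2 * (2 * u / 3) = 2 * u / 3 := by
  ring

theorem sinDefect_self_self (u v : ℝ) : sinDefect u u v v = 0 :=
  sub_self _

theorem edgeDiff_zero_middle (α q : ℝ) : edgeDiff α 0 0 q = 0 := by
  simp only [edgeDiff, sin_zero, mul_zero, sub_self]

theorem neg_edgeDiff_zero_outer (q α : ℝ) :
    -edgeDiff 0 q α 0 = (1 + cos α) * sin q - (cos α + cos q) * sin α := by
  rw [edgeDiff, cos_zero]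
  ring

theorem crossingPair_edgeGap {x y : ℝ} (hx : x ≤ π / 3) (hy : 0 < y) (hyx : y < x)
    (h2y : 2 * y ≤ x + π / 6) :
    CrossingPair (fun α β ↦ sinDefect α (2 * x - 2 * α) β (2 * y - 2 * β))
      (fun α β ↦ edgeGap α (2 * x - 2 * α) β (2 * y - 2 * β)) (2 * x / 3) x 0 (2 * y / 3) where
  fst_le := by linarith
  snd_le := by linarith
  continuousOn_P := by
    unfold sinDefect
    fun_prop
  continuousOn_G := by
    unfold edgeGap edgeDiff
    fun_prop
  strictMonoOn_P_fst β hβ := by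
    have hq : 0 < sin (2 * y - 2 * β) :=
      sin_pos_of_pos_of_lt_pi (by linarith [hβ.2]) (by linarith [hβ.1])
    exact strictMonoOn_sinDefect_fst (by linarith) (by linarith) le_rfl (by linarith)
      (sin_nonneg_of_nonneg_of_le_pi hβ.1 (by linarith [hβ.2])) hq.le (.inr hq)
  strictMonoOn_P_snd α hα := by
    have hα' : 0 < sin α := sin_pos_of_pos_of_lt_pi (by linarith [hα.1]) (by linarith [hα.2])
    simp only [← sinDefect_swap α]
    exact strictMonoOn_sinDefect_fst le_rfl (by linarith) (by linarith) (by linarith) hα'.le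
      (sin_nonneg_of_nonneg_of_le_pi (by linarith [hα.2]) (by linarith [hα.1])) (.inl hα')
  strictMonoOn_G_fst β hβ := by
    refine strictMonoOn_Icc_of_hasDerivAt_pos (fun α _ ↦ hasDerivAt_edgeGap_fst _ α β _) ?_
    rintro α ⟨hα, hαx⟩
    exact edgeGapDeriv_pos (by linarith) (by linarith) (by linarith) hβ.1 (by linarith [hβ.2])
      (by linarith [hβ.2]) (by linarith)
  antitoneOn_G_snd α hα := by
    refine antitoneOn_Icc_of_hasDerivAt_nonpos (fun β _ ↦ hasDerivAt_edgeGap_snd α _ _ β) ?_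
    rintro β ⟨hβ, hβy⟩
    rw [neg_nonpos]
    exact edgeGapDeriv_swap_nonneg (by linarith [hα.2]) (by linarith [hα.1]) (by linarith [hα.2])
      hβ.le (by linarith) (by linarith)
  P_left_top := by
    simp only [two_mul_sub_two_mul_two_thirds, sinDefect_self_self]
  P_right_bot := by
    simp only [sinDefect, sub_self, sin_zero, mul_zero, zero_mul]
  G_left_top := by
    have hneg : edgeGap (2 * x / 3) (2 * x / 3) (2 * y / 3) (2 * y / 3) < 0 := by
      refine sub_neg.mpr ((edgeDiff_neg ?_ ?_ ?_ ?_ ?_ ?_).trans (edgeDiff_pos ?_ ?_ ?_ ?_ ?_ ?_))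
      all_goals first | linarith | exact cos_nonneg_of_mem_Icc ⟨by linarith, by linarith⟩
    simpa only [two_mul_sub_two_mul_two_thirds] using hneg

end SmallAngle

section RightAngle

open Set

variable {α β q y : ℝ}

theorem cos_le_half_of_pi_div_three_le (hα : π / 3 ≤ α) (hα' : α ≤ π) : cos α ≤ 1 / 2 :=
  cos_pi_div_three ▸ cos_le_cos_of_nonneg_of_le_pi (by positivity) hα' hα

theorem sqrt_three_div_two_le_sin (hα : π / 3 ≤ α) (hα' : α ≤ 2 * π / 3) : √3 / 2 ≤ sin α := by
  rw [← cos_pi_div_six, ← cos_pi_div_two_sub]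
  exact cos_le_cos_of_abs_le (abs_le.mpr ⟨by linarith, by linarith⟩) (by linarith [pi_pos])

theorem sin_pi_sub_two_mul (α : ℝ) : sin (π - 2 * α) = 2 * sin α * cos α := by
  rw [sin_pi_sub, sin_two_mul]

theorem cos_pi_sub_two_mul (α : ℝ) : cos (π - 2 * α) = 1 - 2 * cos α ^ 2 := by
  rw [cos_pi_sub, cos_two_mul, neg_sub]

theorem cos_two_mul_add_lt (hα : π / 3 ≤ α) (hα' : α < π / 2) (hβ : 0 ≤ cos β) (hq : 0 < q)
    (hq' : q < π) :
    cos (2 * α) + cos β * cos (q - α) < 2 * sin q * sin (π - 2 * α) := by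
  have hcos : 0 < cos α := cos_pos_of_mem_Ioo ⟨by linarith, by linarith⟩
  have hcos' : cos α ≤ 1 / 2 := cos_le_half_of_pi_div_three_le hα (by linarith)
  have hsin : 0 < sin α := sin_pos_of_pos_of_lt_pi (by linarith) (by linarith)
  have hsinq : 0 < sin q := sin_pos_of_pos_of_lt_pi hq hq'
  have hprod : cos β * cos (q - α) ≤ cos α + sin q * sin α := by
    rcases le_total 0 (cos (q - α)) with hpos | hneg
    · refine (mul_le_of_le_one_left hpos (cos_le_one β)).trans ?_
      rw [cos_sub]
      linarith [mul_le_of_le_one_left hcos.le (cos_le_one q)]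
    · exact (mul_nonpos_of_nonneg_of_nonpos hβ hneg).trans (by positivity)
  suffices (2 * cos α - 1) * (cos α + 1) < sin q * sin α * (4 * cos α - 1) by
    rw [cos_two_mul, sin_pi_sub_two_mul]
    linarith
  have hsin_pos : 0 < sin q * sin α := mul_pos hsinq hsin
  rcases le_or_gt (cos α) (1 / 4) with hle | hgt
  · have : sin q * sin α ≤ 1 := mul_le_one₀ (sin_le_one q) hsin.le (sin_le_one α)
    nlinarith
  · calc (2 * cos α - 1) * (cos α + 1) ≤ 0 :=
          mul_nonpos_of_nonpos_of_nonneg (by linarith) (by linarith)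
      _ < sin q * sin α * (4 * cos α - 1) := mul_pos hsin_pos (by linarith)

theorem cos_add_sub_add_nonneg (hα : π / 3 ≤ α) (hα' : α ≤ π / 2) (hβ : 0 ≤ β) (hβq : β ≤ q)
    (hq : 2 * β + q ≤ 2 * π / 3) :
    0 ≤ cos (β + α - q) + cos β * cos (q - α) + 2 * cos q * cos (π - 2 * α) := by
  have hcos : 0 ≤ cos α := cos_nonneg_of_mem_Icc ⟨by linarith, hα'⟩
  have hcos' : cos α ≤ 1 / 2 := cos_le_half_of_pi_div_three_le hα (by linarith)
  rw [cos_pi_sub_two_mul]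
  rcases le_or_gt q (π / 2) with hq' | hq'
  · have hcosp : 0 ≤ 1 - 2 * cos α ^ 2 := by nlinarith
    have hcosq : 0 ≤ cos q := cos_nonneg_of_mem_Icc ⟨by linarith, hq'⟩
    have hcosβ : 0 ≤ cos β := cos_nonneg_of_mem_Icc ⟨by linarith, by linarith⟩
    have hdiff : 0 ≤ cos (q - α) := cos_nonneg_of_mem_Icc ⟨by linarith, by linarith⟩
    have hsum : 0 ≤ cos (β + α - q) := cos_nonneg_of_mem_Icc ⟨by linarith, by linarith⟩
    positivity
  · have hsum : 1 / 2 ≤ cos (β + α - q) :=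
      half_le_cos_of_abs_le (abs_le.mpr ⟨by linarith, by linarith⟩)
    have hcosβ : 4 / 5 ≤ cos β := by
      have : β ^ 2 ≤ (4 / 12) ^ 2 := by
        gcongr
        linarith [pi_lt_four]
      linarith [one_sub_sq_div_two_le_cos (x := β)]
    have hcosq : -(1 / 2) ≤ cos q := by
      rw [neg_le, ← cos_pi_sub]
      exact cos_le_half_of_pi_div_three_le (by linarith) (by linarith)
    have hdiff : 3 / 4 - cos α / 2 ≤ cos (q - α) := by
      have hsin := sqrt_three_div_two_le_sin hα (by linarith)
      have hmono : cos (π - π / 3 - α) ≤ cos (q - α) :=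
        cos_le_cos_of_abs_le (abs_le.mpr ⟨by linarith, by linarith⟩) (by linarith)
      rw [cos_sub, cos_pi_sub, sin_pi_sub, cos_pi_div_three, sin_pi_div_three] at hmono
      nlinarith [sq_sqrt (show (0 : ℝ) ≤ 3 by norm_num), sqrt_nonneg 3]
    have hprod : 4 / 5 * (3 / 4 - cos α / 2) ≤ cos β * cos (q - α) :=
      mul_le_mul hcosβ hdiff (by linarith) (by linarith)
    have hcosp : 0 ≤ 1 - 2 * cos α ^ 2 := by nlinarith
    linarith [mul_le_mul_of_nonneg_right hcosq hcosp, sq_nonneg (cos α - 1 / 10)]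

theorem cos_mul_sin_add_pos (hα : π / 3 ≤ α) (hα' : α ≤ π / 2) (hβ : 0 < β) (hβ' : β < π / 2)
    (hq : 0 ≤ q) (hβq : β + q ≤ 2 * π / 3) :
    0 < cos β * sin α + 2 * cos q * sin (π - 2 * α) := by
  have hcos : 0 ≤ cos α := cos_nonneg_of_mem_Icc ⟨by linarith, hα'⟩
  have hcos' : cos α ≤ 1 / 2 := cos_le_half_of_pi_div_three_le hα (by linarith)
  have hsin : 0 < sin α := sin_pos_of_pos_of_lt_pi (by linarith) (by linarith)
  have hcosβ : 0 < cos β := cos_pos_of_mem_Ioo ⟨by linarith, by linarith⟩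
  suffices 0 < cos β + 4 * cos α * cos q by
    rw [sin_pi_sub_two_mul]
    linarith [mul_pos hsin this]
  rcases le_total 0 (cos q) with hpos | hneg
  · positivity
  · have hcosq : -cos (π / 3 + β) ≤ cos q := by
      rw [← cos_pi_sub]
      exact cos_le_cos_of_nonneg_of_le_pi hq (by linarith) (by linarith)
    have hsinβ : 0 < √3 * sin β :=
      mul_pos (by positivity) (sin_pos_of_pos_of_lt_pi hβ (by linarith))
    rw [cos_add, cos_pi_div_three, sin_pi_div_three] at hcosq
    linarith [mul_le_mul_of_nonpos_right hcos' hneg]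

theorem edgeSum_pi_sub_two_mul_pos (hα : π / 3 ≤ α) (hα' : α ≤ π / 2) (hβ : 0 ≤ cos β)
    (hq : 0 < q) (hq' : q ≤ 2 * π / 3) : 0 < edgeSum β q α (π - 2 * α) := by
  have hcos : 0 ≤ cos α := cos_nonneg_of_mem_Icc ⟨by linarith, hα'⟩
  have hcos' : cos α ≤ 1 / 2 := cos_le_half_of_pi_div_three_le hα (by linarith)
  have hsin : 0 ≤ sin α := sin_nonneg_of_nonneg_of_le_pi (by linarith) (by linarith)
  have hsinq : 0 < sin q := sin_pos_of_pos_of_lt_pi hq (by linarith)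
  have hcosp : 0 < 1 - 2 * cos α ^ 2 := by nlinarith
  rw [edgeSum, cos_pi_sub_two_mul]
  rcases le_or_gt q (π / 2) with hle | hgt
  · have hcosq : 0 ≤ cos q := cos_nonneg_of_mem_Icc ⟨by linarith, hle⟩
    positivity
  · have hcosq : -(1 / 2) ≤ cos q := by
      rw [neg_le, ← cos_pi_sub]
      exact cos_le_half_of_pi_div_three_le (by linarith) (by linarith)
    have hsqrt := lt_sqrt_three
    have hsinq' := sqrt_three_div_two_le_sin (α := q) (by linarith) hq'
    have hprod : -(1 / 2) ≤ cos β * cos q := by nlinarith [cos_le_one β]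
    have hfst : cos α - 1 / 2 ≤ (cos α + cos β * cos q) * sin α := by
      nlinarith [sin_le_one α]
    have hsnd : (1 - 2 * cos α ^ 2) * 0.86 ≤ (1 - 2 * cos α ^ 2 + cos β * cos α) * sin q := by
      gcongr
      · exact le_add_of_nonneg_right (by positivity)
      · linarith
    nlinarith

theorem crossingPair_neg_edgeDiff (hy : 0 < y) (hy' : y ≤ π / 3) :
    CrossingPair (fun α β ↦ sinDefect α (2 * (π / 2) - 2 * α) β (2 * y - 2 * β))
      (fun α β ↦ -edgeDiff β (2 * y - 2 * β) α (2 * (π / 2) - 2 * α))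
      (2 * (π / 2) / 3) (π / 2) 0 (2 * y / 3) where
  fst_le := by linarith [pi_pos]
  snd_le := by linarith
  continuousOn_P := by
    unfold sinDefect
    fun_prop
  continuousOn_G := by
    unfold edgeDiff
    fun_prop
  strictMonoOn_P_fst β hβ := by
    have hq : 0 < sin (2 * y - 2 * β) :=
      sin_pos_of_pos_of_lt_pi (by linarith [hβ.2]) (by linarith [hβ.1])
    exact strictMonoOn_sinDefect_fst (by linarith) (by linarith) le_rfl le_rfl
      (sin_nonneg_of_nonneg_of_le_pi hβ.1 (by linarith [hβ.2])) hq.le (.inr hq)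
  strictMonoOn_P_snd α hα := by
    simp only [← sinDefect_swap α]
    refine strictMonoOn_Icc_of_hasDerivAt_pos (fun β _ ↦ hasDerivAt_sinDefect_fst _ β _ _) ?_
    rintro β ⟨hβ, hβy⟩
    rw [mul_div_cancel₀ _ two_ne_zero]
    exact cos_mul_sin_add_pos (by linarith [hα.1]) hα.2 hβ (by linarith) (by linarith)
      (by linarith)
  strictMonoOn_G_fst β hβ := by
    refine strictMonoOn_Icc_of_hasDerivAt_pos
      (fun α _ ↦ (hasDerivAt_edgeDiff_snd β _ _ α).neg) ?_
    rintro α ⟨hα, hαx⟩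
    rw [neg_pos, sub_neg, mul_div_cancel₀ _ two_ne_zero]
    exact cos_two_mul_add_lt (by linarith) hαx
      (cos_nonneg_of_mem_Icc ⟨by linarith [hβ.1], by linarith [hβ.2]⟩) (by linarith [hβ.2])
      (by linarith [hβ.1])
  antitoneOn_G_snd α hα := by
    refine antitoneOn_Icc_of_hasDerivAt_nonpos
      (fun β _ ↦ (hasDerivAt_edgeDiff_fst _ β α _).neg) ?_
    rintro β ⟨hβ, hβy⟩
    rw [neg_nonpos, mul_div_cancel₀ _ two_ne_zero]
    exact cos_add_sub_add_nonneg (by linarith [hα.1]) hα.2 hβ.le (by linarith) (by linarith)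
  P_left_top := by
    simp only [two_mul_sub_two_mul_two_thirds, sinDefect_self_self]
  P_right_bot := by
    simp only [sinDefect, sub_self, sin_zero, mul_zero, zero_mul]
  G_left_top := by
    have hpos : 0 < edgeDiff (2 * y / 3) (2 * y / 3) (2 * (π / 2) / 3) (2 * (π / 2) / 3) := by
      refine edgeDiff_pos ?_ ?_ ?_ ?_ ?_ ?_
      all_goals first | linarith | exact cos_nonneg_of_mem_Icc ⟨by linarith, by linarith⟩
    simpa only [two_mul_sub_two_mul_two_thirds, neg_neg_iff_pos] using hpos

end RightAngle

section EdgeConditions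

open Set

/-- The domain of the edge conditions with `x`, `y` for `π / a`, `π / b`. The left end
`max 0 (x - π / 4)` of the first interval is `π / 12` for `a = 3` and `0` for `a ≥ 4`. -/
noncomputable def edgeDomain (x y : ℝ) : Set (ℝ × ℝ) :=
  (if x = π / 2 then Icc (π / 3) (π / 2) else Icc (max 0 (x - π / 4)) x) ×ˢ Icc 0 y

/-- The solutions in `edgeDomain x y` of the edge-condition system with `x`, `y` for
`π / a`, `π / b`. -/
def edgeSolutions (x y : ℝ) : Set (ℝ × ℝ) :=
  {p | p ∈ edgeDomain x y ∧ edgeFun p.1 (2 * x - 2 * p.1) p.2 (2 * y - 2 * p.2) = 0 ∧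
    edgeFun p.2 (2 * y - 2 * p.2) p.1 (2 * x - 2 * p.1) = 0}

variable {x y : ℝ}

theorem fst_mem_of_mem_edgeDomain (hx : x ≤ π / 3) {p : ℝ × ℝ} (hp : p ∈ edgeDomain x y) :
    p.1 ∈ Icc (max 0 (x - π / 4)) x := by
  have hne : x ≠ π / 2 := by linarith [pi_pos]
  simpa only [if_neg hne] using hp.1

theorem common_zero_of_mem_edgeSolutions (hx : x ≤ π / 3) (hyx : y < x)
    (h2y : 2 * y ≤ x + π / 6) {p : ℝ × ℝ} (hp : p ∈ edgeSolutions x y) :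
    p ∈ Icc (2 * x / 3) x ×ˢ Icc 0 (2 * y / 3) ∧
      sinDefect p.1 (2 * x - 2 * p.1) p.2 (2 * y - 2 * p.2) = 0 ∧
      edgeGap p.1 (2 * x - 2 * p.1) p.2 (2 * y - 2 * p.2) = 0 := by
  obtain ⟨α, β⟩ := p
  obtain ⟨hD, h₁, h₂⟩ := hp
  obtain ⟨⟨hα, hαx⟩, hβ, hβy⟩ := And.intro (fst_mem_of_mem_edgeDomain hx hD) hD.2
  obtain ⟨hα, hαx'⟩ := max_le_iff.mp hα
  have hq_nonneg : 0 ≤ 2 * y - 2 * β := by linarith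
  have hdef : sinDefect α (2 * x - 2 * α) β (2 * y - 2 * β) = 0 :=
    sinDefect_eq_zero hα (by linarith) hβ hq_nonneg (by linarith) (by linarith) h₁ h₂
  have hE₁ : edgeDiff α (2 * x - 2 * α) β (2 * y - 2 * β) = 0 := by
    refine edgeDiff_eq_zero ?_ ?_ ?_ ?_ h₁ <;> constructor <;> linarith
  have hE₂ : edgeDiff β (2 * y - 2 * β) α (2 * x - 2 * α) = 0 := by
    refine edgeDiff_eq_zero ?_ ?_ ?_ ?_ h₂ <;> constructor <;> linarith
  have hpα : 2 * x - 2 * α ≤ α :=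
    snd_le_fst_of_edgeDiff_eq_zero hα (by linarith) hβ (by linarith) hq_nonneg (by linarith)
      (by linarith) hdef hE₁ hE₂
  have hβq : β ≤ 2 * y - 2 * β :=
    le_of_sinDefect_nonpos hpα (by linarith) (by linarith) (by linarith) (by linarith) hq_nonneg
      hdef.le
  exact ⟨⟨⟨by linarith, hαx⟩, hβ, by linarith⟩, hdef, by rw [edgeGap, hE₁, hE₂, sub_zero]⟩

theorem mem_edgeSolutions_of_common_zero (hx : x ≤ π / 3) (hyx : y < x)
    (h2y : 2 * y ≤ x + π / 6) {p : ℝ × ℝ} (hp : p ∈ Ico (2 * x / 3) x ×ˢ Ioc 0 (2 * y / 3))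
    (hdef : sinDefect p.1 (2 * x - 2 * p.1) p.2 (2 * y - 2 * p.2) = 0)
    (hgap : edgeGap p.1 (2 * x - 2 * p.1) p.2 (2 * y - 2 * p.2) = 0) : p ∈ edgeSolutions x y := by
  obtain ⟨α, β⟩ := p
  obtain ⟨⟨hα, hαx⟩, hβ, hβy⟩ := hp
  dsimp only at hα hαx hβ hβy hdef hgap
  have hcos {t : ℝ} (ht : 0 ≤ t) (ht' : t < π / 2) : 0 < cos t :=
    cos_pos_of_mem_Ioo ⟨by linarith, ht'⟩
  have hsin {t : ℝ} (ht : 0 < t) (ht' : t < π) : 0 < sin t :=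
    sin_pos_of_pos_of_lt_pi ht ht'
  have hcosα : 0 < cos α := hcos (by linarith) (by linarith)
  have hcosβ : 0 < cos β := hcos (by linarith) (by linarith)
  have hcosp : 0 < cos (2 * x - 2 * α) := hcos (by linarith) (by linarith)
  have hcosq : 0 < cos (2 * y - 2 * β) := hcos (by linarith) (by linarith)
  have hsinα : 0 < sin α := hsin (by linarith) (by linarith)
  have hsinβ : 0 < sin β := hsin (by linarith) (by linarith)
  have hsinp : 0 < sin (2 * x - 2 * α) := hsin (by linarith) (by linarith)
  have hsinq : 0 < sin (2 * y - 2 * β) := hsin (by linarith) (by linarith)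
  have hne : x ≠ π / 2 := by linarith
  refine ⟨⟨?_, hβ.le, by linarith⟩, edgeFun_eq_zero_of_edgeGap_eq_zero hsinα
    (edgeSum_pos hcosα.le hcosp.le hcosβ hcosq.le hsinp.le hsinβ)
    (edgeSum_pos hcosβ.le hcosq.le hcosα hcosp.le hsinq.le hsinα) hdef hgap⟩
  rw [if_neg hne]
  exact ⟨max_le (by linarith) (by linarith), hαx.le⟩

theorem mem_edgeDomain_pi_div_two {p : ℝ × ℝ} :
    p ∈ edgeDomain (π / 2) y ↔ p.1 ∈ Icc (π / 3) (π / 2) ∧ p.2 ∈ Icc 0 y := by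
  rw [edgeDomain, if_pos rfl, mem_prod]

theorem sinDefect_eq_zero_of_mem_edgeSolutions_pi_div_two (hy : y ≤ π / 3) {p : ℝ × ℝ}
    (hp : p ∈ edgeSolutions (π / 2) y) :
    sinDefect p.1 (2 * (π / 2) - 2 * p.1) p.2 (2 * y - 2 * p.2) = 0 := by
  obtain ⟨α, β⟩ := p
  obtain ⟨hD, h₁, h₂⟩ := hp
  obtain ⟨⟨hα, hα'⟩, hβ, hβy⟩ := mem_edgeDomain_pi_div_two.mp hD
  -- `α + p + β < π` fails only for `α = β = y = π / 3`, where `β + q + α < π` takes its place.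
  rcases (hβy.trans (hy.trans hα)).lt_or_eq with hβα | hβα
  · exact sinDefect_eq_zero (by linarith) (by linarith) hβ (by linarith) (by linarith)
      (by linarith) h₁ h₂
  · rw [← sinDefect_swap]
    exact sinDefect_eq_zero hβ (by linarith) (by linarith) (by linarith) (by linarith)
      (by linarith [pi_pos]) h₂ h₁

theorem common_zero_of_mem_edgeSolutions_pi_div_two (hy : 0 < y) (hy' : y ≤ π / 3) {p : ℝ × ℝ}
    (hp : p ∈ edgeSolutions (π / 2) y) :
    p ∈ Icc (2 * (π / 2) / 3) (π / 2) ×ˢ Icc 0 (2 * y / 3) ∧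
      sinDefect p.1 (2 * (π / 2) - 2 * p.1) p.2 (2 * y - 2 * p.2) = 0 ∧
      -edgeDiff p.2 (2 * y - 2 * p.2) p.1 (2 * (π / 2) - 2 * p.1) = 0 := by
  have hdef := sinDefect_eq_zero_of_mem_edgeSolutions_pi_div_two hy' hp
  obtain ⟨α, β⟩ := p
  obtain ⟨hD, -, h₂⟩ := hp
  obtain ⟨⟨hα, hα'⟩, hβ, hβy⟩ := mem_edgeDomain_pi_div_two.mp hD
  have hβq : β ≤ 2 * y - 2 * β :=
    le_of_sinDefect_nonpos (by linarith) (by linarith) hα' (by linarith) (by linarith)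
      (by linarith) hdef.le
  have hsum : 0 < edgeSum β (2 * y - 2 * β) α (2 * (π / 2) - 2 * α) := by
    rw [mul_div_cancel₀ _ two_ne_zero]
    exact edgeSum_pi_sub_two_mul_pos hα hα'
      (cos_nonneg_of_mem_Icc ⟨by linarith, by linarith⟩) (by linarith) (by linarith)
  refine ⟨⟨⟨by linarith, hα'⟩, hβ, by linarith⟩, hdef, ?_⟩
  rw [edgeFun_eq_neg_edgeDiff_mul_edgeSum, ← neg_mul] at h₂
  exact (mul_eq_zero.mp h₂).resolve_right hsum.ne'

theorem mem_edgeSolutions_pi_div_two_of_common_zero {p : ℝ × ℝ}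
    (hp : p ∈ Ico (2 * (π / 2) / 3) (π / 2) ×ˢ Ioc 0 (2 * y / 3))
    (hdef : sinDefect p.1 (2 * (π / 2) - 2 * p.1) p.2 (2 * y - 2 * p.2) = 0)
    (hdiff : -edgeDiff p.2 (2 * y - 2 * p.2) p.1 (2 * (π / 2) - 2 * p.1) = 0) :
    p ∈ edgeSolutions (π / 2) y := by
  obtain ⟨⟨hα, hα'⟩, hβ, hβy⟩ := hp
  have hsin : sin p.1 ≠ 0 :=
    (sin_pos_of_pos_of_lt_pi (by linarith [pi_pos]) (by linarith [pi_pos])).ne'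
  have h₂ : edgeFun p.2 (2 * y - 2 * p.2) p.1 (2 * (π / 2) - 2 * p.1) = 0 := by
    rw [edgeFun_eq_neg_edgeDiff_mul_edgeSum, ← neg_mul, hdiff, zero_mul]
  exact ⟨mem_edgeDomain_pi_div_two.mpr ⟨⟨by linarith, hα'.le⟩, hβ.le, by linarith⟩,
    edgeFun_eq_zero_of_sinDefect_eq_zero hsin hdef h₂, h₂⟩

theorem stmt0_general (hx : x = π / 2 ∨ x ≤ π / 3) (hy : 0 < y) (hyx : y < x)
    (h2y : 2 * y ≤ x + π / 6) :
    ((∃ p ∈ edgeSolutions x y, 0 < p.1 ∧ p.1 < x ∧ 0 < p.2 ∧ p.2 < y) ↔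
      (cos x + cos (2 * y)) * sin x < (1 + cos x) * sin (2 * y)) ∧
    ((cos x + cos (2 * y)) * sin x < (1 + cos x) * sin (2 * y) →
      ∃! p, p ∈ edgeSolutions x y) := by
  obtain ⟨G, h, hfwd, hbwd, hcorner⟩ : ∃ G : ℝ → ℝ → ℝ,
      CrossingPair (fun α β ↦ sinDefect α (2 * x - 2 * α) β (2 * y - 2 * β)) G
        (2 * x / 3) x 0 (2 * y / 3) ∧
      (∀ p ∈ edgeSolutions x y, p ∈ Icc (2 * x / 3) x ×ˢ Icc 0 (2 * y / 3) ∧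
        sinDefect p.1 (2 * x - 2 * p.1) p.2 (2 * y - 2 * p.2) = 0 ∧ G p.1 p.2 = 0) ∧
      (∀ p ∈ Ico (2 * x / 3) x ×ˢ Ioc 0 (2 * y / 3),
        sinDefect p.1 (2 * x - 2 * p.1) p.2 (2 * y - 2 * p.2) = 0 → G p.1 p.2 = 0 →
          p ∈ edgeSolutions x y) ∧
      G x 0 = (1 + cos x) * sin (2 * y) - (cos x + cos (2 * y)) * sin x := by
    rcases hx with rfl | hx
    · refine ⟨_, crossingPair_neg_edgeDiff hy (by linarith),
        fun p ↦ common_zero_of_mem_edgeSolutions_pi_div_two hy (by linarith),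
        fun p ↦ mem_edgeSolutions_pi_div_two_of_common_zero, ?_⟩
      simp only [sub_self, mul_zero, sub_zero, neg_edgeDiff_zero_outer]
    · refine ⟨_, crossingPair_edgeGap hx hy hyx h2y,
        fun p ↦ common_zero_of_mem_edgeSolutions hx hyx h2y,
        fun p ↦ mem_edgeSolutions_of_common_zero hx hyx h2y, ?_⟩
      simp only [edgeGap, sub_self, mul_zero, sub_zero, edgeDiff_zero_middle, zero_sub,
        neg_edgeDiff_zero_outer]
  have hiff := h.exists_iff_and_existsUnique hfwd hbwd
  rw [hcorner, sub_pos] at hiff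
  refine ⟨?_, hiff.2⟩
  rw [← hiff.1]
  refine exists_congr fun p ↦ and_congr_right fun hp ↦ ⟨?_, ?_⟩
  · rintro ⟨-, hα, hβ, -⟩
    obtain ⟨⟨hα', -⟩, -, hβ'⟩ := (hfwd p hp).1
    exact ⟨⟨hα', hα⟩, hβ, hβ'⟩
  · rintro ⟨⟨hα, hα'⟩, hβ, hβ'⟩
    exact ⟨by linarith, hα', hβ, by linarith⟩

end EdgeConditions

section IntegerAngles

variable {a b : ℤ}

theorem pi_div_eq_or_le (ha : 2 ≤ a) : π / a = π / 2 ∨ π / a ≤ π / 3 := by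
  rcases ha.eq_or_lt with rfl | ha'
  · exact .inl (by norm_num)
  · have : (3 : ℝ) ≤ a := by exact_mod_cast ha'
    exact .inr (by gcongr)

theorem two_mul_pi_div_le (ha : 2 ≤ a) (hab : a < b) : 2 * (π / b) ≤ π / a + π / 6 := by
  have hprod : (0 : ℝ) ≤ (a - 2) * (a - 3) := by
    rcases ha.eq_or_lt with rfl | ha'
    · norm_num
    · have : (3 : ℝ) ≤ a := by exact_mod_cast ha'
      exact mul_nonneg (by linarith) (by linarith)
  have : (2 : ℝ) ≤ a := by exact_mod_cast ha
  have hab' : (a : ℝ) + 1 ≤ b := by exact_mod_cast hab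
  have hfrac : 2 / (a + 1 : ℝ) ≤ 1 / a + 1 / 6 := by
    rw [div_add_div _ _ (by positivity) (by norm_num), div_le_div_iff₀ (by positivity)
      (by positivity)]
    linarith
  calc 2 * (π / b) ≤ 2 * (π / (a + 1)) := by gcongr
    _ = π * (2 / (a + 1)) := by ring
    _ ≤ π * (1 / a + 1 / 6) := by gcongr
    _ = π / a + π / 6 := by ring

theorem Dom_eq_edgeDomain (ha : 2 ≤ a) : Dom a b = edgeDomain (π / a) (π / b) := by
  have hne {n : ℝ} (hn : 2 < n) : π / n ≠ π / 2 := (div_lt_div_of_pos_left pi_pos two_pos hn).ne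
  unfold Dom alphaI edgeDomain
  congr 1
  obtain rfl | rfl | h4 : a = 2 ∨ a = 3 ∨ 4 ≤ a := by lia
  · simp only [Int.cast_ofNat, if_true]
  · rw [if_neg (by norm_num), if_pos rfl, if_neg (hne (by norm_num)), Int.cast_ofNat,
      max_eq_right (by linarith [pi_pos])]
    ring_nf
  · have h4' : (4 : ℝ) ≤ a := by exact_mod_cast h4
    have hle : π / a ≤ π / 4 := by gcongr
    rw [if_neg (by lia), if_neg (by lia), if_neg (hne (by linarith)),
      max_eq_left (by linarith)]

theorem f1_eq_edgeFun (a b : ℤ) (α β : ℝ) :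
    f1 a b α β = edgeFun α (2 * (π / a) - 2 * α) β (2 * (π / b) - 2 * β) := by
  simp only [f1, B00, B11, edgeFun, gramDet, mul_div_assoc]

theorem f2_eq_edgeFun (a b : ℤ) (α β : ℝ) :
    f2 a b α β = edgeFun β (2 * (π / b) - 2 * β) α (2 * (π / a) - 2 * α) := by
  simp only [f2, B00, B11, edgeFun, gramDet, mul_div_assoc]
  ring

theorem mem_edgeSolutions_pi_div_iff (ha : 2 ≤ a) {p : ℝ × ℝ} :
    p ∈ edgeSolutions (π / a) (π / b) ↔ p ∈ Dom a b ∧ f1 a b p.1 p.2 = 0 ∧ f2 a b p.1 p.2 = 0 := by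
  rw [Dom_eq_edgeDomain ha, f1_eq_edgeFun, f2_eq_edgeFun]
  rfl

end IntegerAngles

theorem stmt0 (a b : ℤ) (ha : 2 ≤ a) (hab : a < b) :
    ((∃ p : ℝ × ℝ, p ∈ Dom a b ∧ f1 a b p.1 p.2 = 0 ∧ f2 a b p.1 p.2 = 0 ∧
        0 < p.1 ∧ p.1 < π / (a : ℝ) ∧ 0 < p.2 ∧ p.2 < π / (b : ℝ)) ↔
      (1 + cos (π / (a : ℝ))) * sin (2 * π / (b : ℝ)) >
        (cos (π / (a : ℝ)) + cos (2 * π / (b : ℝ))) * sin (π / (a : ℝ))) ∧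
    ((1 + cos (π / (a : ℝ))) * sin (2 * π / (b : ℝ)) >
        (cos (π / (a : ℝ)) + cos (2 * π / (b : ℝ))) * sin (π / (a : ℝ)) →
      ∃! p : ℝ × ℝ, p ∈ Dom a b ∧ f1 a b p.1 p.2 = 0 ∧ f2 a b p.1 p.2 = 0) := by
  have ha' : (0 : ℝ) < a := by exact_mod_cast two_pos.trans_le ha
  have hab' : (a : ℝ) < b := by exact_mod_cast hab
  simpa only [mem_edgeSolutions_pi_div_iff ha, mul_div_assoc, and_assoc, gt_iff_lt] using
    stmt0_general (pi_div_eq_or_le ha) (div_pos pi_pos (ha'.trans hab'))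
      (div_lt_div_of_pos_left pi_pos ha' hab') (two_mul_pi_div_le ha hab)
end

section
/- Let a = 2 and let b > 2 be an integer. Suppose α₁ ∈ (0, π/2) and β₁ ∈ (0, π/b) with β₂ := 2π/b − 2β₁ > 0 satisfy the edge-condition system f₁(α₁,β₁) = 0 and f₂(α₁,β₁) = 0, and suppose that both B₀₀ := 1 − cos²α₁ − cos²α₂ − cos²β₁ − 2·cos α₁·cos α₂·cos β₁ and B₁₁ := 1 − cos²α₁ − cos²β₁ − cos²β₂ − 2·cos α₁·cos β₁·cos β₂ are nonzero (where α₂ := π − 2α₁). Then cos α₁ = sin β₁ / (2·sin β₂); in particular, if α₁ < π/3 then sin β₁ > sin β₂. -/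
open Real

/-!
Multiplying `f₁ = 0` by `sin² α₁` and eliminating `B₁₁` with `f₂ = 0` leaves
`B₀₀ (sin² α₁ sin² β₁ - sin² α₂ sin² β₂) = 0`. All four sines are positive, so
`sin α₁ sin β₁ = sin α₂ sin β₂` for every pair `a, b ≥ 2`. For `a = 2` the ratio
`sin α₂ / sin α₁` is `2 cos α₁`. If `3 α₁ < 2π / a`, then `α₁ < α₂` while `α₁ + α₂ < π`, so
`sin α₁ < sin α₂` and the product relation forces `sin β₂ < sin β₁`.
-/

theorem mul_eq_mul_of_mul_sq_eq_mul_sq {R : Type*} [CommRing R] [LinearOrder R]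
    [IsStrictOrderedRing R] {B C x y z w : R} (hB : B ≠ 0)
    (hx : 0 ≤ x) (hy : 0 ≤ y) (hz : 0 ≤ z) (hw : 0 ≤ w)
    (hxy : B * x ^ 2 = C * y ^ 2) (hzw : C * z ^ 2 = B * w ^ 2) : z * x = y * w := by
  have hsq : (z * x) ^ 2 = (y * w) ^ 2 :=
    mul_left_cancel₀ hB (by linear_combination z ^ 2 * hxy + y ^ 2 * hzw)
  exact (pow_left_inj₀ (mul_nonneg hz hx) (mul_nonneg hy hw) two_ne_zero).1 hsq

theorem sin_lt_sin_of_lt_of_add_lt_pi {x y : ℝ} (hx : -(π / 2) ≤ x) (hxy : x < y)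
    (hsum : x + y < π) : sin x < sin y := by
  have hsin : 0 < sin ((y - x) / 2) := sin_pos_of_pos_of_lt_pi (by linarith) (by linarith)
  have hcos : 0 < cos ((y + x) / 2) := cos_pos_of_mem_Ioo ⟨by linarith, by linarith⟩
  rw [← sub_pos, sin_sub_sin]
  positivity

theorem sin_pos_of_mem_Ioo_pi_div {n x : ℝ} (hn : 1 ≤ n) (hx : x ∈ Set.Ioo 0 (π / n)) :
    0 < sin x :=
  sin_pos_of_pos_of_lt_pi hx.1 (hx.2.trans_le (div_le_self pi_pos.le hn))

theorem two_pi_div_le_pi {n : ℝ} (hn : 2 ≤ n) : 2 * π / n ≤ π := by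
  rw [div_le_iff₀ (by linarith), mul_comm]
  exact mul_le_mul_of_nonneg_left hn pi_pos.le

theorem sin_two_pi_div_sub_two_mul_pos {n x : ℝ} (hn : 2 ≤ n) (hx : x ∈ Set.Ioo 0 (π / n)) :
    0 < sin (2 * π / n - 2 * x) := by
  obtain ⟨hx_pos, hx_lt⟩ := hx
  refine sin_pos_of_pos_of_lt_pi ?_ (by linarith [two_pi_div_le_pi hn])
  rw [mul_div_assoc]
  linarith

theorem sin_two_pi_div_two_sub_two_mul_div_sin {x : ℝ} (hx : sin x ≠ 0) :
    sin (2 * π / ((2 : ℤ) : ℝ) - 2 * x) / sin x = 2 * cos x := by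
  rw [Int.cast_ofNat, mul_div_cancel_left₀ π two_ne_zero, sin_pi_sub, sin_two_mul]
  field_simp

theorem sin_mul_sin_eq_of_f1_of_f2 {a b : ℤ} {α₁ β₁ : ℝ} (hα₁ : 0 ≤ sin α₁)
    (hα₂ : 0 ≤ sin (2 * π / (a : ℝ) - 2 * α₁)) (hβ₁ : 0 ≤ sin β₁)
    (hβ₂ : 0 ≤ sin (2 * π / (b : ℝ) - 2 * β₁))
    (hf1 : f1 a b α₁ β₁ = 0) (hf2 : f2 a b α₁ β₁ = 0) (hB00 : B00 a α₁ β₁ ≠ 0) :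
    sin α₁ * sin β₁ = sin (2 * π / (a : ℝ) - 2 * α₁) * sin (2 * π / (b : ℝ) - 2 * β₁) :=
  mul_eq_mul_of_mul_sq_eq_mul_sq hB00 hβ₁ hα₂ hα₁ hβ₂ (sub_eq_zero.1 hf1) (sub_eq_zero.1 hf2)

theorem stmt2_general {a b : ℤ} (ha : 2 ≤ a) (hb : 2 ≤ b) {α₁ β₁ : ℝ}
    (hα : α₁ ∈ Set.Ioo 0 (π / (a : ℝ))) (hβ : β₁ ∈ Set.Ioo 0 (π / (b : ℝ)))
    (hf1 : f1 a b α₁ β₁ = 0) (hf2 : f2 a b α₁ β₁ = 0) (hB00 : B00 a α₁ β₁ ≠ 0) :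
    sin (2 * π / (a : ℝ) - 2 * α₁) / sin α₁ = sin β₁ / sin (2 * π / (b : ℝ) - 2 * β₁) ∧
    (3 * α₁ < 2 * π / (a : ℝ) → sin β₁ > sin (2 * π / (b : ℝ) - 2 * β₁)) := by
  have ha' : (2 : ℝ) ≤ a := by exact_mod_cast ha
  have hb' : (2 : ℝ) ≤ b := by exact_mod_cast hb
  have hα₁ : 0 < sin α₁ := sin_pos_of_mem_Ioo_pi_div (one_le_two.trans ha') hα
  have hβ₁ : 0 < sin β₁ := sin_pos_of_mem_Ioo_pi_div (one_le_two.trans hb') hβ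
  have hα₂ := sin_two_pi_div_sub_two_mul_pos ha' hα
  have hβ₂ := sin_two_pi_div_sub_two_mul_pos hb' hβ
  have hmul := sin_mul_sin_eq_of_f1_of_f2 hα₁.le hα₂.le hβ₁.le hβ₂.le hf1 hf2 hB00
  refine ⟨?_, fun hlt ↦ ?_⟩
  · rw [div_eq_div_iff hα₁.ne' hβ₂.ne', ← hmul, mul_comm]
  · have hsin : sin α₁ < sin (2 * π / (a : ℝ) - 2 * α₁) :=
      sin_lt_sin_of_lt_of_add_lt_pi (by linarith [hα.1, pi_pos]) (by linarith)
        (by linarith [hα.1, two_pi_div_le_pi ha'])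
    refine lt_of_mul_lt_mul_left ?_ hα₁.le
    rw [hmul]
    exact mul_lt_mul_of_pos_right hsin hβ₂

theorem stmt2 (b : ℤ) (hb : 2 < b) (α₁ β₁ : ℝ)
    (hα : α₁ ∈ Set.Ioo 0 (π / 2)) (hβ : β₁ ∈ Set.Ioo 0 (π / (b : ℝ)))
    (hβ₂ : 0 < 2 * π / (b : ℝ) - 2 * β₁)
    (hf1 : f1 2 b α₁ β₁ = 0) (hf2 : f2 2 b α₁ β₁ = 0)
    (hB00 : B00 2 α₁ β₁ ≠ 0) (hB11 : B11 b α₁ β₁ ≠ 0) :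
    cos α₁ = sin β₁ / (2 * sin (2 * π / (b : ℝ) - 2 * β₁)) ∧
    (α₁ < π / 3 → sin β₁ > sin (2 * π / (b : ℝ) - 2 * β₁)) := by
  have hα' : α₁ ∈ Set.Ioo 0 (π / ((2 : ℤ) : ℝ)) := by exact_mod_cast hα
  obtain ⟨hratio, hlt⟩ := stmt2_general le_rfl hb.le hα' hβ hf1 hf2 hB00
  rw [sin_two_pi_div_two_sub_two_mul_div_sin
    (sin_pos_of_mem_Ioo_pi_div one_le_two hα).ne'] at hratio
  exact ⟨by linear_combination hratio / 2, fun h ↦ hlt (by push_cast; linarith)⟩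
end

section
/- Let a = 3 and let b ≥ 4 be an integer. Then for every α₁ ∈ [0, π/12) and every β₁ ∈ [0, π/b], one has f₁(α₁, β₁) > 0. In particular, the edge-condition system f₁ = 0, f₂ = 0 has no solution with α₁ ∈ [0, π/12) and β₁ ∈ [0, π/b]. -/
open Real

/-!
Write `α₂ = 2π/a − 2α₁` and `β₂ = 2π/b − 2β₁`. Completing the square in `cos α₁` in both `B₀₀` and
`B₁₁` gives
`f₁ = sin²α₂ (cos α₁ + cos β₁ cos β₂)² − sin²β₁ (cos α₁ + cos α₂ cos β₁)²
  + sin²α₂ sin²β₁ (cos²β₂ − cos²β₁)`.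
Let `cos α₁ ≥ 1/2`. If `cos β₁, cos β₂ ≥ 0`, the first square is at least `cos²α₁`; if
`−1/2 ≤ cos α₂ ≤ 0`, the second is at most `cos²α₁`. As `sin²α₂ ≥ 3/4`, `sin²β₁ cos²β₁ ≤ 1/4` and,
for `|β₁| ≤ π/4`, `sin²β₁ ≤ 1/2`, we obtain `f₁ ≥ (cos²α₁ − 3/4) / 4`, which is positive when
`|α₁| < π/6`.
-/

lemma B00_eq_mul_sub_sq (a : ℤ) (α₁ β₁ : ℝ) :
    B00 a α₁ β₁ = sin (2 * π / a - 2 * α₁) ^ 2 * sin β₁ ^ 2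
      - (cos α₁ + cos (2 * π / a - 2 * α₁) * cos β₁) ^ 2 := by
  rw [B00, sin_sq, sin_sq]
  ring

lemma B11_eq_mul_sub_sq (b : ℤ) (α₁ β₁ : ℝ) :
    B11 b α₁ β₁ = sin β₁ ^ 2 * sin (2 * π / b - 2 * β₁) ^ 2
      - (cos α₁ + cos β₁ * cos (2 * π / b - 2 * β₁)) ^ 2 := by
  rw [B11, sin_sq, sin_sq]
  ring

lemma f1_eq (a b : ℤ) (α₁ β₁ : ℝ) :
    f1 a b α₁ β₁ =
      sin (2 * π / a - 2 * α₁) ^ 2 * (cos α₁ + cos β₁ * cos (2 * π / b - 2 * β₁)) ^ 2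
      - sin β₁ ^ 2 * (cos α₁ + cos (2 * π / a - 2 * α₁) * cos β₁) ^ 2
      + sin (2 * π / a - 2 * α₁) ^ 2 * sin β₁ ^ 2
        * (cos (2 * π / b - 2 * β₁) ^ 2 - cos β₁ ^ 2) := by
  rw [f1, B00_eq_mul_sub_sq, B11_eq_mul_sub_sq, cos_sq' (2 * π / b - 2 * β₁), cos_sq' β₁]
  ring

lemma sin_sq_mul_cos_sq_le (θ : ℝ) : sin θ ^ 2 * cos θ ^ 2 ≤ 1 / 4 := by
  have h : 4 * (sin θ ^ 2 * cos θ ^ 2) = sin (2 * θ) ^ 2 := by rw [sin_two_mul]; ring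
  linarith [sin_sq_le_one (2 * θ)]

lemma le_f1_of_cos_bounds {a b : ℤ} {α₁ β₁ : ℝ} (hα₁ : 1 / 2 ≤ cos α₁)
    (hα₂ : cos (2 * π / a - 2 * α₁) ∈ Set.Icc (-(1 / 2)) 0)
    (hβ₁ : 0 ≤ cos β₁) (hβ₁_sin : sin β₁ ^ 2 ≤ 1 / 2) (hβ₂ : 0 ≤ cos (2 * π / b - 2 * β₁)) :
    (cos α₁ ^ 2 - 3 / 4) / 4 ≤ f1 a b α₁ β₁ := by
  rw [f1_eq]
  set α₂ := 2 * π / a - 2 * α₁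
  set β₂ := 2 * π / b - 2 * β₁
  obtain ⟨hα₂_ge, hα₂_le⟩ := hα₂
  have sin_α₂ : 3 / 4 ≤ sin α₂ ^ 2 := by
    rw [sin_sq]
    nlinarith
  have first_sq : cos α₁ ^ 2 ≤ (cos α₁ + cos β₁ * cos β₂) ^ 2 :=
    pow_le_pow_left₀ (by linarith) (le_add_of_nonneg_right (mul_nonneg hβ₁ hβ₂)) 2
  have second_sq : (cos α₁ + cos α₂ * cos β₁) ^ 2 ≤ cos α₁ ^ 2 := by
    have product_nonpos : cos α₂ * cos β₁ ≤ 0 := mul_nonpos_of_nonpos_of_nonneg hα₂_le hβ₁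
    have product_ge : -(1 / 2) ≤ cos α₂ * cos β₁ := by nlinarith [cos_le_one β₁]
    exact sq_le_sq' (by linarith) (by linarith)
  have cos_sq_sub_nonneg : 0 ≤ cos α₁ ^ 2 - 1 / 4 := by nlinarith
  calc (cos α₁ ^ 2 - 3 / 4) / 4
      = 3 / 4 * (cos α₁ ^ 2 - 1 / 4) - 1 / 2 * cos α₁ ^ 2 := by ring
    _ ≤ sin α₂ ^ 2 * (cos α₁ ^ 2 - 1 / 4) - sin β₁ ^ 2 * cos α₁ ^ 2 := by gcongr
    _ ≤ sin α₂ ^ 2 * (cos α₁ ^ 2 - sin β₁ ^ 2 * cos β₁ ^ 2) - sin β₁ ^ 2 * cos α₁ ^ 2 := by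
      gcongr
      exact sin_sq_mul_cos_sq_le β₁
    _ = sin α₂ ^ 2 * cos α₁ ^ 2 - sin β₁ ^ 2 * cos α₁ ^ 2
          + sin α₂ ^ 2 * sin β₁ ^ 2 * (0 - cos β₁ ^ 2) := by ring
    _ ≤ sin α₂ ^ 2 * (cos α₁ + cos β₁ * cos β₂) ^ 2
          - sin β₁ ^ 2 * (cos α₁ + cos α₂ * cos β₁) ^ 2
          + sin α₂ ^ 2 * sin β₁ ^ 2 * (cos β₂ ^ 2 - cos β₁ ^ 2) := by
      gcongr
      exact sq_nonneg _

lemma sqrt_three_div_two_lt_cos {θ : ℝ} (hθ : |θ| < π / 6) : √3 / 2 < cos θ := by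
  rw [← cos_pi_div_six, ← cos_abs θ]
  exact cos_lt_cos_of_nonneg_of_le_pi (abs_nonneg θ) (by linarith [pi_pos]) hθ

lemma cos_two_pi_div_three_sub_two_mul_mem_Icc {θ : ℝ} (hθ : θ ∈ Set.Icc 0 (π / 12)) :
    cos (2 * π / 3 - 2 * θ) ∈ Set.Icc (-(1 / 2)) 0 := by
  obtain ⟨hθ_ge, hθ_le⟩ := hθ
  constructor
  · calc -(1 / 2) = cos (π - π / 3) := by rw [cos_pi_sub, cos_pi_div_three]
      _ ≤ cos (2 * π / 3 - 2 * θ) :=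
        cos_le_cos_of_nonneg_of_le_pi (by linarith) (by linarith) (by linarith)
  · exact cos_nonpos_of_pi_div_two_le_of_le (by linarith) (by linarith)

lemma cos_two_pi_div_sub_two_mul_nonneg {b θ : ℝ} (hb : 4 ≤ b) (hθ : θ ∈ Set.Icc 0 (π / 4)) :
    0 ≤ cos (2 * π / b - 2 * θ) := by
  obtain ⟨hθ_ge, hθ_le⟩ := hθ
  have angle_nonneg : 0 ≤ 2 * π / b := by positivity
  have angle_le : 2 * π / b ≤ 2 * π / 4 := by gcongr
  exact cos_nonneg_of_mem_Icc ⟨by linarith, by linarith⟩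

lemma sin_sq_le_one_half {θ : ℝ} (hθ : |θ| ≤ π / 4) : sin θ ^ 2 ≤ 1 / 2 := by
  have h : 0 ≤ cos (2 * θ) :=
    cos_nonneg_of_mem_Icc ⟨by linarith [neg_abs_le θ], by linarith [le_abs_self θ]⟩
  rw [sin_sq_eq_half_sub]
  linarith

theorem stmt4_general (b : ℤ) (hb : 4 ≤ b) {α₁ β₁ : ℝ} (hα₁ : α₁ ∈ Set.Icc 0 (π / 12))
    (hβ₁ : β₁ ∈ Set.Icc 0 (π / 4)) : 0 < f1 3 b α₁ β₁ := by
  have cos_α₁ : √3 / 2 < cos α₁ :=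
    sqrt_three_div_two_lt_cos (by rw [abs_of_nonneg hα₁.1]; linarith [hα₁.2, pi_pos])
  have cos_sq_α₁ : 3 / 4 < cos α₁ ^ 2 :=
    calc 3 / 4 = (√3 / 2) ^ 2 := by rw [div_pow, sq_sqrt (by norm_num)]; norm_num
      _ < cos α₁ ^ 2 := by gcongr
  have half_le : 1 / 2 ≤ cos α₁ := by linarith [one_le_sqrt.2 (by norm_num : (1 : ℝ) ≤ 3)]
  have cos_α₂ : cos (2 * π / (3 : ℤ) - 2 * α₁) ∈ Set.Icc (-(1 / 2)) 0 := by
    exact_mod_cast cos_two_pi_div_three_sub_two_mul_mem_Icc hα₁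
  have cos_β₁ : 0 ≤ cos β₁ :=
    cos_nonneg_of_mem_Icc ⟨by linarith [hβ₁.1, pi_pos], by linarith [hβ₁.2, pi_pos]⟩
  have sin_β₁ : sin β₁ ^ 2 ≤ 1 / 2 := sin_sq_le_one_half (by rw [abs_of_nonneg hβ₁.1]; exact hβ₁.2)
  have cos_β₂ : 0 ≤ cos (2 * π / b - 2 * β₁) :=
    cos_two_pi_div_sub_two_mul_nonneg (by exact_mod_cast hb) hβ₁
  calc 0 < (cos α₁ ^ 2 - 3 / 4) / 4 := by linarith
    _ ≤ f1 3 b α₁ β₁ := le_f1_of_cos_bounds half_le cos_α₂ cos_β₁ sin_β₁ cos_β₂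

theorem stmt4 (b : ℤ) (hb : 4 ≤ b) :
    (∀ α₁ ∈ Set.Ico 0 (π / 12), ∀ β₁ ∈ Set.Icc 0 (π / (b : ℝ)),
      f1 3 b α₁ β₁ > 0) ∧
    ¬ ∃ α₁ ∈ Set.Ico 0 (π / 12), ∃ β₁ ∈ Set.Icc 0 (π / (b : ℝ)),
      f1 3 b α₁ β₁ = 0 ∧ f2 3 b α₁ β₁ = 0 := by
  have f1_pos : ∀ α₁ ∈ Set.Ico 0 (π / 12), ∀ β₁ ∈ Set.Icc 0 (π / (b : ℝ)), 0 < f1 3 b α₁ β₁ :=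
    fun α₁ hα₁ β₁ hβ₁ ↦ stmt4_general b hb (Set.Ico_subset_Icc_self hα₁)
      ⟨hβ₁.1, hβ₁.2.trans (by gcongr; exact_mod_cast hb)⟩
  exact ⟨f1_pos, fun ⟨α₁, hα₁, β₁, hβ₁, hf1, _⟩ ↦ (f1_pos α₁ hα₁ β₁ hβ₁).ne' hf1⟩
end

section
/- Let a, b be integers with b > a ≥ 2. If f₂(π/a, 0) = 0, then (α₁, β₁) = (π/a, 0) is a solution of the edge-condition system f₁ = 0, f₂ = 0, it is the unique solution of this system in D, and it is not proper (since β₁ = 0). -/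
open Real

/-!
Put `u = π / (2a)` and `w = π / b`. Then `f₂(π/a, 0)` factors as
`16 cos² u · (sin³ u - sin (u - w) cos w) · (sin (u + w) cos w - sin³ u)`, and the last factor is
positive unless `b = 2`. For `a = 2` the middle factor vanishes only at `b = 8`. For `a ≥ 3` it
never vanishes: it is positive up to `b = 2a` because then `sin (u - w) ≤ 0`, negative as soon as
`b` is a little larger, and only four pairs `(a, b)` escape both estimates. So
`(a, b) = (2, 8)`.

For `a = 2` and `b ≥ 8`, eliminating `B₁₁` from the system gives `sin² β₁ = 4 cos² α₁ sin² β₂`,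
since `B₀₀ < 0`. Substituting this back into `f₂` leaves a quantity that is negative unless
`cos α₁ = 0`, and then `sin β₁ = 0` as well.
-/

section BoundaryPoint

variable {u w : ℝ}

theorem f1_pi_div_zero (a b : ℤ) : f1 a b (π / a) 0 = 0 := by
  have hα₂ : 2 * π / (a : ℝ) - 2 * (π / a) = 0 := by ring
  simp [f1, hα₂]

theorem f2_pi_div_zero_eq_mul (a b : ℤ) :
    f2 a b (π / a) 0 = 16 * cos (π / (2 * a)) ^ 2 *
      (sin (π / (2 * a)) ^ 3 - sin (π / (2 * a) - π / b) * cos (π / b)) *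
      (sin (π / (2 * a) + π / b) * cos (π / b) - sin (π / (2 * a)) ^ 3) := by
  have hα₁ : π / (a : ℝ) = 2 * (π / (2 * a)) := by ring
  have hα₂ : 2 * π / (a : ℝ) - 2 * (π / a) = 0 := by ring
  have hβ₂ : 2 * π / (b : ℝ) - 2 * 0 = 2 * (π / b) := by ring
  rw [f2, B00, B11, hα₂, hβ₂, hα₁]
  generalize π / (2 * (a : ℝ)) = u
  generalize π / (b : ℝ) = w
  rw [cos_zero, cos_two_mul, cos_two_mul, sin_two_mul, sin_two_mul, sin_add, sin_sub]
  have hu : sin u ^ 2 = 1 - cos u ^ 2 := sin_sq u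
  rw [show sin u ^ 3 = sin u * (1 - cos u ^ 2) by rw [← hu]; ring]
  ring

theorem sin_pow_three_lt_sin_add_mul_cos (hu₀ : 0 < u) (hu : u ≤ π / 4) (hw₀ : 0 ≤ w)
    (huw : u + 2 * w < π) : sin u ^ 3 < sin (u + w) * cos w := by
  have hsin : 0 < sin u := sin_pos_of_pos_of_lt_pi hu₀ (by linarith [pi_pos])
  have hcos : 0 ≤ cos (2 * u) := cos_nonneg_of_mem_Icc ⟨by linarith, by linarith⟩
  have hsum : 0 < sin (u + 2 * w) := sin_pos_of_pos_of_lt_pi (by linarith) huw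
  have hprod : 2 * sin (u + w) * cos w = sin u + sin (u + 2 * w) := by
    rw [two_mul_sin_mul_cos]; ring_nf
  have hcube : 2 * sin u ^ 3 = sin u - sin u * cos (2 * u) := by
    rw [pow_succ, sin_sq_eq_half_sub]; ring
  linarith [mul_nonneg hsin.le hcos]

theorem sin_sub_mul_cos_lt_sin_pow_three_of_le (hu₀ : 0 < u) (huw : u ≤ w) (hw : w ≤ π / 2) :
    sin (u - w) * cos w < sin u ^ 3 := by
  have hsin : 0 < sin u := sin_pos_of_pos_of_lt_pi hu₀ (by linarith [pi_pos])
  have hsub : sin (u - w) ≤ 0 := sin_nonpos_of_nonpos_of_neg_pi_le (by linarith) (by linarith)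
  have hcos : 0 ≤ cos w := cos_nonneg_of_mem_Icc ⟨by linarith, hw⟩
  exact (mul_nonpos_of_nonpos_of_nonneg hsub hcos).trans_lt (pow_pos hsin 3)

theorem sin_sub_mul_cos_lt_sin_pow_three_of_lt (hwu : w ≤ u) (hw₀ : 0 ≤ w) (hw : w ≤ π / 2)
    (h : (u - w) * cos w < sin u ^ 3) : sin (u - w) * cos w < sin u ^ 3 := by
  have hcos : 0 ≤ cos w := cos_nonneg_of_mem_Icc ⟨by linarith, hw⟩
  exact (mul_le_mul_of_nonneg_right (sin_le (sub_nonneg.2 hwu)) hcos).trans_lt h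

theorem sub_mul_cos_le_sin_sub_mul_cos (hw₀ : 0 ≤ w) (hwu : w ≤ u) (hu : u < π / 2) :
    (u - w) * cos u ≤ sin (u - w) * cos w := by
  have hcos : 0 < cos (u - w) := cos_pos_of_mem_Ioo ⟨by linarith, by linarith⟩
  have hcosw : 0 ≤ cos w := cos_nonneg_of_mem_Icc ⟨by linarith, by linarith⟩
  have hsin : 0 ≤ sin (u - w) * sin w :=
    mul_nonneg (sin_nonneg_of_nonneg_of_le_pi (by linarith) (by linarith))
      (sin_nonneg_of_nonneg_of_le_pi hw₀ (by linarith))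
  have htan : (u - w) * cos (u - w) ≤ sin (u - w) := by
    rw [← le_div_iff₀ hcos, ← tan_eq_sin_div_cos]
    exact le_tan (by linarith) (by linarith)
  calc (u - w) * cos u = (u - w) * cos (u - w + w) := by rw [sub_add_cancel]
    _ ≤ (u - w) * (cos (u - w) * cos w) := by
      rw [cos_add]
      exact mul_le_mul_of_nonneg_left (by linarith) (by linarith)
    _ = (u - w) * cos (u - w) * cos w := by ring
    _ ≤ sin (u - w) * cos w := mul_le_mul_of_nonneg_right htan hcosw

theorem sin_pow_three_lt_sin_sub_mul_cos (hw₀ : 0 ≤ w) (hwu : w < u) (hu : u < π / 2)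
    (h : u ^ 3 ≤ (u - w) * (1 - u ^ 2 / 2)) : sin u ^ 3 < sin (u - w) * cos w := by
  have hsin : 0 ≤ sin u := sin_nonneg_of_nonneg_of_le_pi (by linarith) (by linarith)
  calc sin u ^ 3 < u ^ 3 := pow_lt_pow_left₀ (sin_lt (by linarith)) hsin (by norm_num)
    _ ≤ (u - w) * (1 - u ^ 2 / 2) := h
    _ ≤ (u - w) * cos u :=
      mul_le_mul_of_nonneg_left one_sub_sq_div_two_le_cos (by linarith)
    _ ≤ sin (u - w) * cos w := sub_mul_cos_le_sin_sub_mul_cos hw₀ hwu.le hu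

end BoundaryPoint

section Classification

variable {a b : ℤ}

-- With `u = π / (2 * a)` and `w = π / b`, the hypothesis `h` is `u ^ 3 ≤ (u - w) * (1 - u ^ 2 / 2)`
-- after the estimate `π ^ 2 ≤ 10`.
theorem sin_pow_three_lt_of_large (ha : 2 ≤ a) (hab : 2 * a < b)
    (h : 20 * b ≤ (b - 2 * a) * (8 * a ^ 2 - 10)) :
    sin (π / (2 * a)) ^ 3 < sin (π / (2 * a) - π / b) * cos (π / b) := by
  have ha' : (2 : ℝ) ≤ a := by exact_mod_cast ha
  have hab' : 2 * (a : ℝ) < b := by exact_mod_cast hab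
  have h' : 20 * (b : ℝ) ≤ (b - 2 * a) * (8 * a ^ 2 - 10) := by exact_mod_cast h
  have hpi : π ^ 2 ≤ 10 := by nlinarith [pi_pos, pi_lt_d2]
  have hb : (0 : ℝ) < b := by linarith
  apply sin_pow_three_lt_sin_sub_mul_cos (by positivity)
    (div_lt_div_of_pos_left pi_pos (by linarith) hab')
    (div_lt_div_of_pos_left pi_pos two_pos (by linarith))
  have hkey : 2 * π ^ 2 * b ≤ (b - 2 * a) * (8 * a ^ 2 - π ^ 2) := by nlinarith
  rw [← sub_nonneg]
  have hdiff : (π / (2 * a) - π / b) * (1 - (π / (2 * (a : ℝ))) ^ 2 / 2) - (π / (2 * a)) ^ 3 =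
      π / (16 * a ^ 3 * b) * ((b - 2 * a) * (8 * a ^ 2 - π ^ 2) - 2 * π ^ 2 * b) := by
    field_simp
    ring
  rw [hdiff]
  exact mul_nonneg (by positivity) (sub_nonneg.2 hkey)

theorem sin_sub_mul_cos_lt_of_exceptional
    (h : a = 3 ∧ b = 7 ∨ a = 3 ∧ b = 8 ∨ a = 4 ∧ b = 9 ∨ a = 5 ∧ b = 11) :
    sin (π / (2 * a) - π / b) * cos (π / b) < sin (π / (2 * a)) ^ 3 := by
  have hpi := pi_gt_d4
  have hpi' := pi_lt_d4
  have hsin₈ : 0.38 ≤ sin (π / 8) := le_trans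
    (by nlinarith [pow_le_pow_left₀ pi_pos.le hpi'.le 3]) (sin_ge_sub_cube (by positivity))
  have hsin₁₀ : 0.308 ≤ sin (π / 10) := le_trans
    (by nlinarith [pow_le_pow_left₀ pi_pos.le hpi'.le 3]) (sin_ge_sub_cube (by positivity))
  have hcos₈ : cos (π / 8) ≤ 0.95 := by
    have hsqrt : √2 ≤ 1.5 := sqrt_le_iff.2 (by norm_num)
    have hsqrt' : √(2 + √2) ≤ 1.9 := sqrt_le_iff.2 ⟨by norm_num, by linarith⟩
    rw [cos_pi_div_eight]
    linarith
  have mul_cos_le {x y : ℝ} (hx : 0 ≤ x) : x * cos y ≤ x :=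
    mul_le_of_le_one_right hx (cos_le_one y)
  rcases h with ⟨rfl, rfl⟩ | ⟨rfl, rfl⟩ | ⟨rfl, rfl⟩ | ⟨rfl, rfl⟩ <;>
    apply sin_sub_mul_cos_lt_sin_pow_three_of_lt <;> norm_num1 <;> try linarith
  · rw [sin_pi_div_six]
    exact (mul_cos_le (by linarith)).trans_lt (by linarith)
  · rw [sin_pi_div_six]
    exact (mul_le_mul_of_nonneg_left hcos₈ (by linarith)).trans_lt (by linarith)
  · calc (π / 8 - π / 9) * cos (π / 9) ≤ π / 8 - π / 9 := mul_cos_le (by linarith)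
      _ < 0.38 ^ 3 := by linarith
      _ ≤ sin (π / 8) ^ 3 := pow_le_pow_left₀ (by norm_num) hsin₈ 3
  · calc (π / 10 - π / 11) * cos (π / 11) ≤ π / 10 - π / 11 := mul_cos_le (by linarith)
      _ < 0.308 ^ 3 := by linarith
      _ ≤ sin (π / 10) ^ 3 := pow_le_pow_left₀ (by norm_num) hsin₁₀ 3

theorem sin_sub_mul_cos_ne_sin_pow_three (ha : 3 ≤ a) (hb : 2 ≤ b) :
    sin (π / (2 * a) - π / b) * cos (π / b) ≠ sin (π / (2 * a)) ^ 3 := by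
  have ha' : (3 : ℝ) ≤ a := by exact_mod_cast ha
  have hb' : (2 : ℝ) ≤ b := by exact_mod_cast hb
  rcases le_or_gt b (2 * a) with hba | hab
  · have hba' : (b : ℝ) ≤ 2 * a := by exact_mod_cast hba
    exact (sin_sub_mul_cos_lt_sin_pow_three_of_le (by positivity)
      (div_le_div_of_nonneg_left pi_pos.le (by linarith) hba')
      (div_le_div_of_nonneg_left pi_pos.le two_pos hb')).ne
  by_cases hexc : a = 3 ∧ b = 7 ∨ a = 3 ∧ b = 8 ∨ a = 4 ∧ b = 9 ∨ a = 5 ∧ b = 11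
  · exact (sin_sub_mul_cos_lt_of_exceptional hexc).ne
  · refine (sin_pow_three_lt_of_large (by lia) hab ?_).ne'
    rcases le_or_gt 6 a with ha₆ | ha₆
    · have := mul_nonneg (by lia : 0 ≤ b - 2 * a - 1) (by nlinarith : 0 ≤ 8 * a ^ 2 - 30)
      nlinarith
    · interval_cases a <;> lia

theorem eq_eight_of_sin_sub_mul_cos_eq (hb : 2 ≤ b)
    (h : sin (π / 4 - π / b) * cos (π / b) = sin (π / 4) ^ 3) : b = 8 := by
  have hb' : (2 : ℝ) ≤ b := by exact_mod_cast hb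
  have hw₀ : 0 < π / b := by positivity
  have hw : π / b ≤ π / 2 := div_le_div_of_nonneg_left pi_pos.le two_pos hb'
  have hprod := two_mul_sin_mul_cos (π / 4 - π / b) (π / b)
  have hcube : 2 * sin (π / 4) ^ 3 = sin (π / 4) := by
    rw [pow_succ, sin_sq_eq_half_sub, show 2 * (π / 4) = π / 2 by ring, cos_pi_div_two]; ring
  have hsin : sin (π / 4 - π / b - π / b) = 0 := by
    rw [sub_add_cancel] at hprod
    linarith
  have hzero := (sin_eq_zero_iff_of_lt_of_lt (by linarith) (by linarith)).1 hsin
  have hb_eq : (b : ℝ) = 8 := by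
    have : π / b = π / 8 := by linarith
    field_simp at this
    linarith
  exact_mod_cast hb_eq

theorem eq_two_and_eq_eight_of_f2_eq_zero (ha : 2 ≤ a) (hb : 2 ≤ b)
    (h : f2 a b (π / a) 0 = 0) : a = 2 ∧ b = 8 := by
  have ha' : (2 : ℝ) ≤ a := by exact_mod_cast ha
  have hu₀ : 0 < π / (2 * (a : ℝ)) := by positivity
  have hu : π / (2 * (a : ℝ)) ≤ π / 4 :=
    div_le_div_of_nonneg_left pi_pos.le (by norm_num) (by linarith)
  have hcos : 0 < cos (π / (2 * (a : ℝ))) := cos_pos_of_mem_Ioo ⟨by linarith, by linarith [pi_pos]⟩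
  have hsecond : sin (π / (2 * a) + π / b) * cos (π / b) - sin (π / (2 * a)) ^ 3 ≠ 0 := by
    rcases hb.eq_or_lt with rfl | hb₃
    · have hsin : 0 < sin (π / (2 * (a : ℝ))) :=
        sin_pos_of_pos_of_lt_pi hu₀ (by linarith [pi_pos])
      simpa using hsin.ne'
    · have hb' : (3 : ℝ) ≤ b := by exact_mod_cast hb₃
      have hw : π / b ≤ π / 3 := div_le_div_of_nonneg_left pi_pos.le three_pos hb'
      exact (sub_pos.2 (sin_pow_three_lt_sin_add_mul_cos hu₀ hu (by positivity)
        (by linarith [pi_pos]))).ne'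
  have hfirst : sin (π / (2 * a) - π / b) * cos (π / b) = sin (π / (2 * a)) ^ 3 := by
    rw [f2_pi_div_zero_eq_mul] at h
    have := (mul_eq_zero.1 h).resolve_right hsecond
    exact (sub_eq_zero.1 ((mul_eq_zero.1 this).resolve_left (by positivity))).symm
  have ha₂ : a = 2 := by
    by_contra hne
    exact sin_sub_mul_cos_ne_sin_pow_three (by lia) hb hfirst
  subst ha₂
  refine ⟨rfl, eq_eight_of_sin_sub_mul_cos_eq hb ?_⟩
  convert hfirst using 3 <;> norm_num

end Classification

section Uniqueness

variable {b : ℤ} {α β : ℝ}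

theorem f1_mul_sin_sq_add_f2_mul_sin_sq (a b : ℤ) (α β : ℝ) :
    f1 a b α β * sin α ^ 2 + f2 a b α β * sin (2 * π / a - 2 * α) ^ 2 =
      B00 a α β * (sin α ^ 2 * sin β ^ 2 -
        sin (2 * π / a - 2 * α) ^ 2 * sin (2 * π / b - 2 * β) ^ 2) := by
  rw [f1, f2]
  ring

theorem one_half_le_cos_sq_of_abs_le_pi_div_four (hβ : |β| ≤ π / 4) : 1 / 2 ≤ cos β ^ 2 := by
  have hcos : 0 ≤ cos (2 * β) :=
    cos_nonneg_of_mem_Icc ⟨by linarith [neg_le_of_abs_le hβ], by linarith [le_of_abs_le hβ]⟩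
  rw [cos_sq]
  linarith

theorem cos_pos_of_abs_le_pi_div_four (hβ : |β| ≤ π / 4) : 0 < cos β :=
  cos_pos_of_mem_Ioo
    ⟨by linarith [neg_le_of_abs_le hβ, pi_pos], by linarith [le_of_abs_le hβ, pi_pos]⟩

theorem B00_two_eq (α β : ℝ) :
    B00 2 α β = 3 * cos α ^ 2 - 4 * cos α ^ 4 - cos β ^ 2 -
      2 * cos α * (1 - 2 * cos α ^ 2) * cos β := by
  rw [B00, show 2 * π / ((2 : ℤ) : ℝ) - 2 * α = π - 2 * α by push_cast; ring, cos_pi_sub,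
    cos_two_mul]
  ring

theorem B00_two_neg (hα₀ : 0 ≤ cos α) (hα : cos α ≤ 1 / 2) (hβ : |β| ≤ π / 4) :
    B00 2 α β < 0 := by
  have hβ₀ := cos_pos_of_abs_le_pi_div_four hβ
  have hβ₂ := one_half_le_cos_sq_of_abs_le_pi_div_four hβ
  have hα₂ : cos α ^ 2 ≤ 1 / 4 := by nlinarith
  have hpoly : 0 ≤ (1 - 2 * cos α ^ 2) * (1 - 4 * cos α ^ 2) :=
    mul_nonneg (by linarith) (by linarith)
  rw [B00_two_eq]
  rcases hα₀.eq_or_lt with hzero | hpos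
  · rw [← hzero]
    linarith
  · have hodd : 0 < 2 * cos α * (1 - 2 * cos α ^ 2) * cos β :=
      mul_pos (mul_pos (by linarith) (by linarith)) hβ₀
    linarith

theorem sin_sq_eq_of_f1_eq_zero_of_f2_eq_zero (hB : B00 2 α β ≠ 0) (hα : sin α ≠ 0)
    (h₁ : f1 2 b α β = 0) (h₂ : f2 2 b α β = 0) :
    sin β ^ 2 = 4 * cos α ^ 2 * sin (2 * π / b - 2 * β) ^ 2 := by
  have h := f1_mul_sin_sq_add_f2_mul_sin_sq 2 b α β
  have hα₂ : sin (2 * π / ((2 : ℤ) : ℝ) - 2 * α) = 2 * sin α * cos α := by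
    rw [← sin_two_mul, ← sin_pi_sub (2 * α)]
    congr 1
    push_cast
    ring
  rw [h₁, h₂, hα₂, zero_mul, zero_mul, add_zero, eq_comm, mul_eq_zero] at h
  have := h.resolve_left hB
  apply mul_left_cancel₀ (pow_ne_zero 2 hα)
  linear_combination this

theorem f2_two_neg (hα₀ : 0 < cos α) (hα : cos α ≤ 1 / 2) (hβ : |β| ≤ π / 4)
    (hβ₂ : |2 * π / b - 2 * β| ≤ π / 4)
    (hrel : sin β ^ 2 = 4 * cos α ^ 2 * sin (2 * π / b - 2 * β) ^ 2) : f2 2 b α β < 0 := by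
  have hs := cos_pos_of_abs_le_pi_div_four hβ
  have hC := cos_pos_of_abs_le_pi_div_four hβ₂
  have hC₂ := one_half_le_cos_sq_of_abs_le_pi_div_four hβ₂
  rw [f2, B00_two_eq, B11]
  generalize 2 * π / (b : ℝ) - 2 * β = β₂ at *
  have hcosβ : cos β ^ 2 = 1 - 4 * cos α ^ 2 * sin β₂ ^ 2 := by rw [cos_sq', hrel]
  have hcosβ₂ : cos β₂ ^ 2 = 1 - sin β₂ ^ 2 := cos_sq' β₂
  rw [hcosβ, hcosβ₂, sin_sq α]
  generalize sin β₂ ^ 2 = q at *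
  generalize cos α = c at *
  have hc₂ : 0 < c ^ 2 := by positivity
  have hc₂' : c ^ 2 ≤ 1 / 4 := by nlinarith
  have hq : q ≤ cos β₂ := by nlinarith
  have heven : 0 < (1 - 2 * q) * (1 - 2 * c ^ 2) + c ^ 2 * (1 - c ^ 2) +
      c ^ 2 * (1 - 2 * q) ^ 2 := by
    have := mul_nonneg (by linarith : 0 ≤ 1 - 2 * q) (by linarith : 0 ≤ 1 - 2 * c ^ 2)
    have := mul_pos hc₂ (by linarith : 0 < 1 - c ^ 2)
    positivity
  have hodd : 0 ≤ 2 * c * cos β * (cos β₂ * (1 - c ^ 2) - q * (1 - 2 * c ^ 2)) := by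
    have := mul_nonneg (sub_nonneg.2 hq) (by linarith : 0 ≤ 1 - 2 * c ^ 2)
    have := mul_nonneg hC.le hc₂.le
    exact mul_nonneg (by positivity) (by linarith)
  linear_combination heven + hodd

theorem eq_pi_div_two_zero_of_mem_Dom (hb : 8 ≤ b) {p : ℝ × ℝ} (hp : p ∈ Dom 2 b)
    (h₁ : f1 2 b p.1 p.2 = 0) (h₂ : f2 2 b p.1 p.2 = 0) : p = (π / 2, 0) := by
  obtain ⟨α, β⟩ := p
  simp only [Dom, alphaI, if_true, Set.mem_prod, Set.mem_Icc] at hp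
  obtain ⟨⟨hα₃, hα₂⟩, hβ₀, hβb⟩ := hp
  have hpi := pi_pos
  have hb' : π / b ≤ π / 8 :=
    div_le_div_of_nonneg_left hpi.le (by norm_num) (by exact_mod_cast hb)
  have hβ : |β| ≤ π / 4 := abs_le.2 ⟨by linarith, by linarith⟩
  have hβ₂ : |2 * π / b - 2 * β| ≤ π / 4 := by
    rw [mul_div_assoc]
    exact abs_le.2 ⟨by linarith, by linarith⟩
  have hcos₀ : 0 ≤ cos α := cos_nonneg_of_mem_Icc ⟨by linarith, hα₂⟩
  have hcos : cos α ≤ 1 / 2 := by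
    rw [← cos_pi_div_three]
    exact cos_le_cos_of_nonneg_of_le_pi (by linarith) (by linarith) hα₃
  have hsin : sin α ≠ 0 := (sin_pos_of_pos_of_lt_pi (by linarith) (by linarith)).ne'
  have hrel := sin_sq_eq_of_f1_eq_zero_of_f2_eq_zero (B00_two_neg hcos₀ hcos hβ).ne hsin h₁ h₂
  have hcosα : cos α = 0 := by
    by_contra hne
    exact (f2_two_neg (hcos₀.lt_of_ne' hne) hcos hβ hβ₂ hrel).ne h₂
  have hsinβ : sin β = 0 := by simpa [hcosα] using hrel
  have hα : α = π / 2 :=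
    injOn_cos ⟨by linarith, by linarith⟩ ⟨by linarith, by linarith⟩
      (hcosα.trans cos_pi_div_two.symm)
  have hβzero : β = 0 := (sin_eq_zero_iff_of_lt_of_lt (by linarith) (by linarith)).1 hsinβ
  rw [hα, hβzero]

end Uniqueness

theorem stmt9_general (a b : ℤ) (ha : 2 ≤ a) (hb : 2 ≤ b)
    (h : f2 a b (π / (a : ℝ)) 0 = 0) :
    (f1 a b (π / (a : ℝ)) 0 = 0 ∧ f2 a b (π / (a : ℝ)) 0 = 0) ∧
    (∀ p : ℝ × ℝ, p ∈ Dom a b → f1 a b p.1 p.2 = 0 → f2 a b p.1 p.2 = 0 →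
      p = (π / (a : ℝ), 0)) ∧
    ¬ (0 < π / (a : ℝ) ∧ π / (a : ℝ) < π / (a : ℝ) ∧
        (0 : ℝ) < 0 ∧ (0 : ℝ) < π / (b : ℝ)) := by
  refine ⟨⟨f1_pi_div_zero a b, h⟩, ?_, fun hproper => lt_irrefl 0 hproper.2.2.1⟩
  obtain ⟨rfl, rfl⟩ := eq_two_and_eq_eight_of_f2_eq_zero ha hb h
  intro p hp h₁ h₂
  exact_mod_cast eq_pi_div_two_zero_of_mem_Dom le_rfl hp h₁ h₂

theorem stmt9 (a b : ℤ) (ha : 2 ≤ a) (hab : a < b)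
    (h : f2 a b (π / (a : ℝ)) 0 = 0) :
    (f1 a b (π / (a : ℝ)) 0 = 0 ∧ f2 a b (π / (a : ℝ)) 0 = 0) ∧
    (∀ p : ℝ × ℝ, p ∈ Dom a b → f1 a b p.1 p.2 = 0 → f2 a b p.1 p.2 = 0 →
      p = (π / (a : ℝ), 0)) ∧
    ¬ (0 < π / (a : ℝ) ∧ π / (a : ℝ) < π / (a : ℝ) ∧
        (0 : ℝ) < 0 ∧ (0 : ℝ) < π / (b : ℝ)) := by
  exact stmt9_general a b ha (by lia) h
end
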